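/- Let T'_{B,m} be the finite set consisting of: all L*₁◇-provable bracket-free sequents with at most 2 antecedent types, all guarded over B of length ≤ m; the sequent ⟨⟩ ⇒ ◇1; all sequents ⟨A⟩ ⇒ ◇A and ⟨□↓A⟩ ⇒ A for guarded A over B with ||A|| ≤ m−2. Then for any L*₁◇ sequent Γ ⇒ A_{n+1} whose yield consists of guarded types over B each of length ≤ m: Γ ⇒ A_{n+1} is provable in L*₁◇ if and only if it is derivable from T'_{B,m} using only Cut. -/

import Mathlib

/-- Types of the bracketed Lambek calculus. -/
inductive PTy where
  | prim : ℕ → PTy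
  | one  : PTy
  | ldiv : PTy → PTy → PTy   -- ldiv A B = A \ B
  | rdiv : PTy → PTy → PTy   -- rdiv B A = B / A
  | mul  : PTy → PTy → PTy
  | dia  : PTy → PTy
  | box  : PTy → PTy
deriving DecidableEq

/-- Type trees: leaves labeled by types, internal nodes are brackets. -/
inductive PTree where
  | leaf : PTy → PTree
  | node : List PTree → PTree

abbrev PHedge := List PTree

/-- Contexts: a hedge with one distinguished hole. -/
inductive PCtx where
  | hole : PHedge → PHedge → PCtx
  | brk  : PCtx → PHedge → PHedge → PCtx

/-- Substitution of a hedge for the hole of a context. -/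
def PCtx.plug : PCtx → PHedge → PHedge
  | .hole pre post, D => pre ++ D ++ post
  | .brk c pre post, D => pre ++ (PTree.node (c.plug D) :: post)

/-- All primitive types occurring in the type belong to `B`. -/
def PTy.over (B : Finset ℕ) : PTy → Prop
  | .prim p => p ∈ B
  | .one => True
  | .ldiv A C => A.over B ∧ C.over B
  | .rdiv C A => C.over B ∧ A.over B
  | .mul A C => A.over B ∧ C.over B
  | .dia A => A.over B
  | .box A => A.over B

/-- Length of a type. -/
def lenP : PTy → ℕ
  | .prim _ => 1
  | .one => 0
  | .ldiv A B => lenP A + lenP B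
  | .rdiv B A => lenP B + lenP A
  | .mul A B => lenP A + lenP B
  | .dia A => lenP A + 2
  | .box A => lenP A + 2

mutual
/-- The yield of a tree: the sequence of types labeling its leaves. -/
def yieldTree : PTree → List PTy
  | .leaf A => [A]
  | .node ts => yieldHedge ts
/-- The yield of a hedge. -/
def yieldHedge : List PTree → List PTy
  | [] => []
  | t :: ts => yieldTree t ++ yieldHedge ts
end
/-- L*₁◇ : the Lambek calculus with brackets and unit, empty antecedents allowed. -/
inductive PProvS1 : PHedge → PTy → Prop where
  | id (p) : PProvS1 [.leaf (.prim p)] (.prim p)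
  | ldivL (G : PHedge) (D : PCtx) (A B C) :
      PProvS1 G A → PProvS1 (D.plug [.leaf B]) C →
      PProvS1 (D.plug (G ++ [.leaf (.ldiv A B)])) C
  | ldivR (Pi : PHedge) (A B) :
      PProvS1 (.leaf A :: Pi) B → PProvS1 Pi (.ldiv A B)
  | rdivL (G : PHedge) (D : PCtx) (A B C) :
      PProvS1 G A → PProvS1 (D.plug [.leaf B]) C →
      PProvS1 (D.plug (.leaf (.rdiv B A) :: G)) C
  | rdivR (Pi : PHedge) (A B) :
      PProvS1 (Pi ++ [.leaf A]) B → PProvS1 Pi (.rdiv B A)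
  | mulL (G : PCtx) (A B C) :
      PProvS1 (G.plug [.leaf A, .leaf B]) C → PProvS1 (G.plug [.leaf (.mul A B)]) C
  | mulR (G D : PHedge) (A B) :
      PProvS1 G A → PProvS1 D B → PProvS1 (G ++ D) (.mul A B)
  | diaL (G : PCtx) (A B) :
      PProvS1 (G.plug [.node [.leaf A]]) B → PProvS1 (G.plug [.leaf (.dia A)]) B
  | diaR (G : PHedge) (A) :
      PProvS1 G A → PProvS1 [.node G] (.dia A)
  | boxL (G : PCtx) (A B) :
      PProvS1 (G.plug [.leaf A]) B → PProvS1 (G.plug [.node [.leaf (.box A)]]) B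
  | boxR (G : PHedge) (A) :
      PProvS1 [.node G] A → PProvS1 G (.box A)
  | oneL (G : PCtx) (A) :
      PProvS1 (G.plug []) A → PProvS1 (G.plug [.leaf .one]) A
  | oneR : PProvS1 [] .one
  | cut (G : PHedge) (D : PCtx) (A B) :
      PProvS1 G A → PProvS1 (D.plug [.leaf A]) B → PProvS1 (D.plug G) B
/-- Derivability of a sequent from a set of sequents using the Cut rule only. -/
inductive CutDeriv (S : Set (PHedge × PTy)) : PHedge → PTy → Prop where
  | base (G A) : (G, A) ∈ S → CutDeriv S G A
  | cut (G : PHedge) (D : PCtx) (A B) :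
      CutDeriv S G A → CutDeriv S (D.plug [.leaf A]) B → CutDeriv S (D.plug G) B
/-- Guarded types: the unit occurs only as the immediate subtype of `◇`. -/
def PTy.guarded : PTy → Prop
  | .prim _ => True
  | .one => False
  | .ldiv A B => A.guarded ∧ B.guarded
  | .rdiv B A => B.guarded ∧ A.guarded
  | .mul A B => A.guarded ∧ B.guarded
  | .dia .one => True
  | .dia A => A.guarded
  | .box A => A.guarded

/-- The set `S'_{B,m}` of L*₁◇-provable bracket-free sequents with at most 2 antecedent
types, all guarded types over `B` of length at most `m`. -/
def SBm' (B : Finset ℕ) (m : ℕ) : Set (PHedge × PTy) :=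
  {s | ∃ (L : List PTy) (A : PTy),
        s = (L.map PTree.leaf, A) ∧ L.length ≤ 2 ∧
        (∀ T ∈ A :: L, T.guarded ∧ T.over B ∧ lenP T ≤ m) ∧
        PProvS1 (L.map PTree.leaf) A}

/-- The set `T'_{B,m}`. -/
def TBm' (B : Finset ℕ) (m : ℕ) : Set (PHedge × PTy) :=
  SBm' B m ∪
  {([PTree.node []], PTy.dia .one)} ∪
  {s | ∃ A : PTy, A.guarded ∧ A.over B ∧ lenP A ≤ m - 2 ∧
        s = ([PTree.node [PTree.leaf A]], PTy.dia A)} ∪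
  {s | ∃ A : PTy, A.guarded ∧ A.over B ∧ lenP A ≤ m - 2 ∧
        s = ([PTree.node [PTree.leaf (PTy.box A)]], A)}

/-! ### Part 1 : contexts, semantic cut elimination -/

def PCtx.comp : PCtx → PCtx → PCtx
  | .hole a b, .hole c d => .hole (a ++ c) (d ++ b)
  | .hole a b, .brk e c d => .brk e (a ++ c) (d ++ b)
  | .brk e a b, f => .brk (e.comp f) a b

theorem PCtx.plug_comp (D E : PCtx) (X : PHedge) : (D.comp E).plug X = D.plug (E.plug X) := by
  induction D with
  | hole a b => cases E <;> simp [PCtx.comp, PCtx.plug]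
  | brk e a b ih => simp [PCtx.comp, PCtx.plug, ih]

/-- The empty context. -/
abbrev PCtx.nil : PCtx := .hole [] []

theorem PCtx.plug_nil (X : PHedge) : PCtx.nil.plug X = X := by simp [PCtx.plug]

/-- Identity sequents are provable. -/
theorem prov_id (A : PTy) : PProvS1 [.leaf A] A := by
  induction A with
  | prim p => exact .id p
  | one => simpa [PCtx.plug] using PProvS1.oneL .nil .one (by simpa [PCtx.plug] using PProvS1.oneR)
  | ldiv A B ihA ihB =>
    apply PProvS1.ldivR
    simpa [PCtx.plug] using PProvS1.ldivL [.leaf A] .nil A B B ihA (by simpa [PCtx.plug] using ihB)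
  | rdiv B A ihB ihA =>
    apply PProvS1.rdivR
    simpa [PCtx.plug] using PProvS1.rdivL [.leaf A] .nil A B B ihA (by simpa [PCtx.plug] using ihB)
  | mul A B ihA ihB =>
    simpa [PCtx.plug] using PProvS1.mulL .nil A B (.mul A B)
      (by simpa [PCtx.plug] using PProvS1.mulR _ _ _ _ ihA ihB)
  | dia A ih =>
    simpa [PCtx.plug] using PProvS1.diaL .nil A (.dia A)
      (by simpa [PCtx.plug] using PProvS1.diaR _ _ ih)
  | box A ih =>
    apply PProvS1.boxR
    simpa [PCtx.plug] using PProvS1.boxL .nil A A (by simpa [PCtx.plug] using ih)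

/-- The types under consideration. -/
def okTy (B : Finset ℕ) (m : ℕ) (A : PTy) : Prop := A.guarded ∧ A.over B ∧ lenP A ≤ m

theorem ok_ldiv {B m A C} (h : okTy B m (.ldiv A C)) : okTy B m A ∧ okTy B m C := by
  obtain ⟨⟨h1, h2⟩, ⟨h3, h4⟩, h5⟩ := h
  simp only [lenP] at h5
  exact ⟨⟨h1, h3, by omega⟩, ⟨h2, h4, by omega⟩⟩

theorem ok_rdiv {B m A C} (h : okTy B m (.rdiv C A)) : okTy B m A ∧ okTy B m C := by
  obtain ⟨⟨h1, h2⟩, ⟨h3, h4⟩, h5⟩ := h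
  simp only [lenP] at h5
  exact ⟨⟨h2, h4, by omega⟩, ⟨h1, h3, by omega⟩⟩

theorem ok_mul {B m A C} (h : okTy B m (.mul A C)) : okTy B m A ∧ okTy B m C := by
  obtain ⟨⟨h1, h2⟩, ⟨h3, h4⟩, h5⟩ := h
  simp only [lenP] at h5
  exact ⟨⟨h1, h3, by omega⟩, ⟨h2, h4, by omega⟩⟩

theorem ok_box {B m A} (h : okTy B m (.box A)) : okTy B m A := by
  obtain ⟨h1, h3, h5⟩ := h
  simp only [lenP] at h5
  exact ⟨h1, h3, by omega⟩

theorem guarded_dia {A : PTy} (hA : A ≠ .one) (h : (PTy.dia A).guarded) : A.guarded := by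
  cases A <;> simp_all [PTy.guarded]

theorem ok_dia {B m A} (hA : A ≠ .one) (h : okTy B m (.dia A)) : okTy B m A := by
  obtain ⟨h1, h3, h5⟩ := h
  simp only [lenP] at h5
  exact ⟨guarded_dia hA h1, h3, by omega⟩

/-- A predicate on sequents closed under the cut-free rules for the types in `ok`. -/
structure ClosedRules (ok : PTy → Prop) (Q : PHedge → PTy → Prop) : Prop where
  id : ∀ p, ok (.prim p) → Q [.leaf (.prim p)] (.prim p)
  ldivL : ∀ G (D : PCtx) A B C, ok (.ldiv A B) → Q G A → Q (D.plug [.leaf B]) C →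
    Q (D.plug (G ++ [.leaf (.ldiv A B)])) C
  ldivR : ∀ P A B, ok (.ldiv A B) → Q (.leaf A :: P) B → Q P (.ldiv A B)
  rdivL : ∀ G (D : PCtx) A B C, ok (.rdiv B A) → Q G A → Q (D.plug [.leaf B]) C →
    Q (D.plug (.leaf (.rdiv B A) :: G)) C
  rdivR : ∀ P A B, ok (.rdiv B A) → Q (P ++ [.leaf A]) B → Q P (.rdiv B A)
  mulL : ∀ (D : PCtx) A B C, ok (.mul A B) → Q (D.plug [.leaf A, .leaf B]) C →
    Q (D.plug [.leaf (.mul A B)]) C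
  mulR : ∀ G H A B, ok (.mul A B) → Q G A → Q H B → Q (G ++ H) (.mul A B)
  diaL : ∀ (D : PCtx) A C, A ≠ .one → ok (.dia A) → Q (D.plug [.node [.leaf A]]) C →
    Q (D.plug [.leaf (.dia A)]) C
  diaR : ∀ G A, A ≠ .one → ok (.dia A) → Q G A → Q [.node G] (.dia A)
  boxL : ∀ (D : PCtx) A C, ok (.box A) → Q (D.plug [.leaf A]) C →
    Q (D.plug [.node [.leaf (.box A)]]) C
  boxR : ∀ G A, ok (.box A) → Q [.node G] A → Q G (.box A)
  empL : ∀ (D : PCtx) C, ok (.dia .one) → Q (D.plug [.node []]) C →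
    Q (D.plug [.leaf (.dia .one)]) C
  empR : ok (.dia .one) → Q [.node []] (.dia .one)

/-- Closure operator. -/
def clQ (Q : PHedge → PTy → Prop) (S : Set PHedge) : Set PHedge :=
  {X | ∀ (D : PCtx) C, (∀ Y ∈ S, Q (D.plug Y) C) → Q (D.plug X) C}

theorem sub_clQ {Q S} {X : PHedge} (h : X ∈ S) : X ∈ clQ Q S := fun _ _ hS => hS X h

/-- Interpretation of types as closed sets of hedges. -/
def semT (Q : PHedge → PTy → Prop) : PTy → Set PHedge
  | .prim p => {X | Q X (.prim p)}
  | .one => clQ Q {[]}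
  | .ldiv A B => {X | ∀ Y ∈ semT Q A, Y ++ X ∈ semT Q B}
  | .rdiv B A => {X | ∀ Y ∈ semT Q A, X ++ Y ∈ semT Q B}
  | .mul A B => clQ Q {Z | ∃ X ∈ semT Q A, ∃ Y ∈ semT Q B, Z = X ++ Y}
  | .dia A => clQ Q {Z | ∃ X ∈ semT Q A, Z = [.node X]}
  | .box A => {X | [.node X] ∈ semT Q A}

theorem clQ_ctx {Q} {S T : Set PHedge} (hT : ∀ X, X ∈ clQ Q T → X ∈ T) (E : PCtx)
    (h : ∀ Y ∈ S, E.plug Y ∈ T) {X} (hX : X ∈ clQ Q S) : E.plug X ∈ T := by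
  apply hT
  intro D C hD
  rw [← PCtx.plug_comp]
  apply hX
  intro Y hY
  rw [PCtx.plug_comp]
  exact hD _ (h Y hY)

theorem clQ_idem {Q} {S : Set PHedge} : ∀ X, X ∈ clQ Q (clQ Q S) → X ∈ clQ Q S := by
  intro X hX D C h
  exact hX D C (fun Y hY => hY D C h)

theorem semT_closed (Q) (A : PTy) : ∀ X, X ∈ clQ Q (semT Q A) → X ∈ semT Q A := by
  induction A with
  | prim p =>
    intro X hX
    have := hX .nil (.prim p) (fun Y hY => by rw [PCtx.plug_nil]; exact hY)
    rwa [PCtx.plug_nil] at this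
  | one => exact clQ_idem
  | mul A B _ _ => exact clQ_idem
  | dia A _ => exact clQ_idem
  | ldiv A B ihA ihB =>
    intro X hX Y hY
    have := clQ_ctx ihB (.hole Y []) (fun Z hZ => by
      simpa [PCtx.plug] using (hZ Y hY : Y ++ Z ∈ semT Q B)) hX
    simpa [PCtx.plug] using this
  | rdiv B A ihB ihA =>
    intro X hX Y hY
    have := clQ_ctx ihB (.hole [] Y) (fun Z hZ => by
      simpa [PCtx.plug] using (hZ Y hY : Z ++ Y ∈ semT Q B)) hX
    simpa [PCtx.plug] using this
  | box A ih =>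
    intro X hX
    have hZ : ∀ Z ∈ semT Q (.box A), (PCtx.brk .nil [] []).plug Z ∈ semT Q A := by
      intro Z hZ
      have h1 : [PTree.node Z] ∈ semT Q A := hZ
      simpa [PCtx.plug] using h1
    have := clQ_ctx ih (.brk .nil [] []) hZ hX
    have h2 : [PTree.node X] ∈ semT Q A := by simpa [PCtx.plug] using this
    exact h2

/-- `Inst Q H X` : `X` arises from `H` by replacing every leaf by a member of its
interpretation. -/
inductive Inst (Q : PHedge → PTy → Prop) : PHedge → PHedge → Prop
  | nil : Inst Q [] []
  | leaf {A X H Y} : X ∈ semT Q A → Inst Q H Y → Inst Q (.leaf A :: H) (X ++ Y)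
  | node {K X H Y} : Inst Q K X → Inst Q H Y → Inst Q (.node K :: H) (.node X :: Y)

theorem Inst.append {Q H X K Y} (h : Inst Q H X) (h' : Inst Q K Y) :
    Inst Q (H ++ K) (X ++ Y) := by
  induction h with
  | nil => exact h'
  | leaf hA _ ih => rw [List.append_assoc]; exact .leaf hA ih
  | node h1 _ _ ih => exact .node h1 ih

theorem Inst.split {Q} {H K Z : PHedge} (h : Inst Q (H ++ K) Z) :
    ∃ X Y, Z = X ++ Y ∧ Inst Q H X ∧ Inst Q K Y := by
  induction H generalizing Z with
  | nil => exact ⟨[], Z, rfl, .nil, h⟩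
  | cons t H ih =>
    cases h with
    | leaf hA h =>
      obtain ⟨X, Y, rfl, h1, h2⟩ := ih h
      exact ⟨_, Y, (List.append_assoc _ _ _).symm, .leaf hA h1, h2⟩
    | node hA h =>
      obtain ⟨X, Y, rfl, h1, h2⟩ := ih h
      exact ⟨_, Y, rfl, .node hA h1, h2⟩

theorem Inst.plug {Q} (D : PCtx) {H Z : PHedge} (h : Inst Q (D.plug H) Z) :
    ∃ (E : PCtx) (X : PHedge), Z = E.plug X ∧ Inst Q H X ∧
      ∀ H' X', Inst Q H' X' → Inst Q (D.plug H') (E.plug X') := by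
  induction D generalizing Z with
  | hole a b =>
    obtain ⟨Z1, Z2, rfl, h1, h2⟩ := Inst.split h
    obtain ⟨Z3, Z4, rfl, h3, h4⟩ := Inst.split h1
    exact ⟨.hole Z3 Z2, Z4, rfl, h4, fun H' X' h' => (h3.append h').append h2⟩
  | brk c a b ih =>
    obtain ⟨Z1, Z2, rfl, h1, h2⟩ := Inst.split h
    cases h2 with
    | node h3 h4 =>
      obtain ⟨E, X, rfl, h5, h6⟩ := ih h3
      exact ⟨.brk E Z1 _, X, rfl, h5, fun H' X' h' => h1.append (.node (h6 _ _ h') h4)⟩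

theorem Inst.leaf1 {Q A X} (h : X ∈ semT Q A) : Inst Q [.leaf A] X := by
  simpa using Inst.leaf h Inst.nil

theorem Inst.leaf1_inv {Q A X} (h : Inst Q [.leaf A] X) : X ∈ semT Q A := by
  cases h with
  | leaf hA h => cases h; simpa using hA

theorem Inst.node1_inv {Q K X} (h : Inst Q [.node K] X) : ∃ Y, X = [.node Y] ∧ Inst Q K Y := by
  cases h with
  | node hA h => cases h; exact ⟨_, rfl, hA⟩

theorem semT_sound (Q) {H C} (h : PProvS1 H C) : ∀ X, Inst Q H X → X ∈ semT Q C := by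
  induction h with
  | id p => exact fun X h => h.leaf1_inv
  | ldivL G D A B C _ _ ih1 ih2 =>
    intro X hX
    obtain ⟨E, Y, rfl, h1, h2⟩ := Inst.plug D hX
    obtain ⟨Y1, Y2, rfl, h3, h4⟩ := h1.split
    exact ih2 _ (h2 _ _ (Inst.leaf1 (h4.leaf1_inv _ (ih1 _ h3))))
  | ldivR P A B _ ih => exact fun X hX Y hY => ih _ (.leaf hY hX)
  | rdivL G D A B C _ _ ih1 ih2 =>
    intro X hX
    obtain ⟨E, Y, rfl, h1, h2⟩ := Inst.plug D hX
    obtain ⟨Y1, Y2, rfl, h3, h4⟩ := Inst.split (H := [_]) h1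
    exact ih2 _ (h2 _ _ (Inst.leaf1 (h3.leaf1_inv _ (ih1 _ h4))))
  | rdivR P A B _ ih => exact fun X hX Y hY => ih _ (hX.append (.leaf1 hY))
  | mulL D A B C _ ih =>
    intro X hX
    obtain ⟨E, Y, rfl, h1, h2⟩ := Inst.plug D hX
    refine clQ_ctx (semT_closed Q C) E ?_ h1.leaf1_inv
    rintro _ ⟨Y1, h3, Y2, h4, rfl⟩
    exact ih _ (h2 _ _ (.leaf h3 (.leaf1 h4)))
  | mulR G D A B _ _ ih1 ih2 =>
    intro X hX
    obtain ⟨Y1, Y2, rfl, h3, h4⟩ := hX.split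
    exact sub_clQ ⟨_, ih1 _ h3, _, ih2 _ h4, rfl⟩
  | diaL D A C _ ih =>
    intro X hX
    obtain ⟨E, Y, rfl, h1, h2⟩ := Inst.plug D hX
    refine clQ_ctx (semT_closed Q C) E ?_ h1.leaf1_inv
    rintro _ ⟨Y1, h3, rfl⟩
    exact ih _ (h2 _ _ (.node (.leaf1 h3) .nil))
  | diaR G A _ ih =>
    intro X hX
    obtain ⟨Y, rfl, h⟩ := hX.node1_inv
    exact sub_clQ ⟨_, ih _ h, rfl⟩
  | boxL D A C _ ih =>
    intro X hX
    obtain ⟨E, Y, rfl, h1, h2⟩ := Inst.plug D hX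
    obtain ⟨Y, rfl, h⟩ := h1.node1_inv
    exact ih _ (h2 _ _ (.leaf1 h.leaf1_inv))
  | boxR G A _ ih => exact fun X hX => ih _ (.node hX .nil)
  | oneL D C _ ih =>
    intro X hX
    obtain ⟨E, Y, rfl, h1, h2⟩ := Inst.plug D hX
    refine clQ_ctx (semT_closed Q C) E ?_ h1.leaf1_inv
    rintro _ rfl
    exact ih _ (h2 _ _ .nil)
  | oneR =>
    intro X hX
    cases hX
    exact sub_clQ rfl
  | cut G D A C _ _ ih1 ih2 =>
    intro X hX
    obtain ⟨E, Y, rfl, h1, h2⟩ := Inst.plug D hX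
    exact ih2 _ (h2 _ _ (.leaf1 (ih1 _ h1)))

theorem clQ_Q {Q} {S : Set PHedge} {A} (h : ∀ Y ∈ S, Q Y A) {X} (hX : X ∈ clQ Q S) : Q X A := by
  have := hX .nil A (fun Y hY => by rw [PCtx.plug_nil]; exact h Y hY)
  rwa [PCtx.plug_nil] at this

theorem semT_truth {B m Q} (R : ClosedRules (okTy B m) Q) (A : PTy) (hA : okTy B m A) :
    [.leaf A] ∈ semT Q A ∧ ∀ X ∈ semT Q A, Q X A := by
  induction A with
  | prim p => exact ⟨R.id p hA, fun X h => h⟩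
  | one => exact hA.1.elim
  | ldiv A C ihA ihC =>
    obtain ⟨hA1, hA2⟩ := ok_ldiv hA
    refine ⟨fun Y hY => semT_closed Q C _ ?_, fun X hX => ?_⟩
    · exact fun D C' h => R.ldivL Y D A C C' hA ((ihA hA1).2 Y hY) (h _ (ihC hA2).1)
    · exact R.ldivR X A C hA ((ihC hA2).2 _ (hX _ (ihA hA1).1))
  | rdiv C A ihC ihA =>
    obtain ⟨hA1, hA2⟩ := ok_rdiv hA
    refine ⟨fun Y hY => semT_closed Q C _ ?_, fun X hX => ?_⟩
    · exact fun D C' h => R.rdivL Y D A C C' hA ((ihA hA1).2 Y hY) (h _ (ihC hA2).1)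
    · exact R.rdivR X A C hA ((ihC hA2).2 _ (hX _ (ihA hA1).1))
  | mul A C ihA ihC =>
    obtain ⟨hA1, hA2⟩ := ok_mul hA
    refine ⟨fun D C' h => ?_, fun X hX => clQ_Q ?_ hX⟩
    · exact R.mulL D A C C' hA (h _ ⟨_, (ihA hA1).1, _, (ihC hA2).1, rfl⟩)
    · rintro _ ⟨Y1, h3, Y2, h4, rfl⟩
      exact R.mulR _ _ _ _ hA ((ihA hA1).2 _ h3) ((ihC hA2).2 _ h4)
  | dia A ihA =>
    by_cases h1 : A = .one
    · subst h1
      refine ⟨fun D C' h => ?_, fun X hX => clQ_Q ?_ hX⟩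
      · exact R.empL D C' hA (h _ ⟨[], sub_clQ rfl, rfl⟩)
      · rintro _ ⟨Y1, h3, rfl⟩
        have := h3 (.brk .nil [] []) (.dia .one) (by
          rintro _ rfl
          simpa [PCtx.plug] using R.empR hA)
        simpa [PCtx.plug] using this
    · have hA1 := ok_dia h1 hA
      refine ⟨fun D C' h => ?_, fun X hX => clQ_Q ?_ hX⟩
      · exact R.diaL D A C' h1 hA (h _ ⟨_, (ihA hA1).1, rfl⟩)
      · rintro _ ⟨Y1, h3, rfl⟩
        exact R.diaR _ _ h1 hA ((ihA hA1).2 _ h3)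
  | box A ihA =>
    have hA1 := ok_box hA
    refine ⟨semT_closed Q A _ ?_, fun X hX => ?_⟩
    · exact fun D C' h => R.boxL D A C' hA (h _ (ihA hA1).1)
    · exact R.boxR _ _ hA ((ihA hA1).2 _ hX)

mutual
theorem inst_selfT {B m Q} (R : ClosedRules (okTy B m) Q) (t : PTree)
    (h : ∀ A ∈ yieldTree t, okTy B m A) : Inst Q [t] [t] := by
  cases t with
  | leaf A => exact Inst.leaf1 (semT_truth R A (h A (by simp [yieldTree]))).1
  | node K => exact .node (inst_selfH R K (by simpa [yieldTree] using h)) .nil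
theorem inst_selfH {B m Q} (R : ClosedRules (okTy B m) Q) (H : List PTree)
    (h : ∀ A ∈ yieldHedge H, okTy B m A) : Inst Q H H := by
  cases H with
  | nil => exact .nil
  | cons t H =>
    exact Inst.append (H := [t]) (X := [t])
      (inst_selfT R t (fun A hA => h A (by simp [yieldHedge, hA])))
      (inst_selfH R H (fun A hA => h A (by simp [yieldHedge, hA])))
end

/-- Semantic cut elimination. -/
theorem cut_elim {B m Q} (R : ClosedRules (okTy B m) Q) {H : PHedge} {C : PTy}
    (hH : ∀ A ∈ yieldHedge H, okTy B m A) (hC : okTy B m C) (h : PProvS1 H C) : Q H C :=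
  (semT_truth R C hC).2 _ (semT_sound Q h _ (inst_selfH R H hH))

set_option linter.unusedSimpArgs false

/-! ### Part 2 : the labelled calculus -/

/-- Guarded types in which every primitive type and every modality carries a label;
`emp l` stands for `◇1`. -/
inductive LTy where
  | prim : ℕ → ℕ → LTy
  | ldiv : LTy → LTy → LTy
  | rdiv : LTy → LTy → LTy
  | mul : LTy → LTy → LTy
  | dia : ℕ → LTy → LTy
  | box : ℕ → LTy → LTy
  | emp : ℕ → LTy

inductive LTree where
  | leaf : LTy → LTree
  | node : ℕ → List LTree → LTree

abbrev LHedge := List LTree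

inductive LCtx where
  | hole : LHedge → LHedge → LCtx
  | brk : ℕ → LCtx → LHedge → LHedge → LCtx

def LCtx.plug : LCtx → LHedge → LHedge
  | .hole pre post, D => pre ++ D ++ post
  | .brk l c pre post, D => pre ++ (LTree.node l (c.plug D) :: post)

abbrev LCtx.nil : LCtx := .hole [] []

/-- Labelled cut-free calculus. -/
inductive LP : LHedge → LTy → Prop where
  | id (p l) : LP [.leaf (.prim p l)] (.prim p l)
  | ldivL (G : LHedge) (D : LCtx) (A B C) :
      LP G A → LP (D.plug [.leaf B]) C → LP (D.plug (G ++ [.leaf (.ldiv A B)])) C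
  | ldivR (Pi : LHedge) (A B) : LP (.leaf A :: Pi) B → LP Pi (.ldiv A B)
  | rdivL (G : LHedge) (D : LCtx) (A B C) :
      LP G A → LP (D.plug [.leaf B]) C → LP (D.plug (.leaf (.rdiv B A) :: G)) C
  | rdivR (Pi : LHedge) (A B) : LP (Pi ++ [.leaf A]) B → LP Pi (.rdiv B A)
  | mulL (D : LCtx) (A B C) :
      LP (D.plug [.leaf A, .leaf B]) C → LP (D.plug [.leaf (.mul A B)]) C
  | mulR (G D : LHedge) (A B) : LP G A → LP D B → LP (G ++ D) (.mul A B)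
  | diaL (D : LCtx) (l A C) :
      LP (D.plug [.node l [.leaf A]]) C → LP (D.plug [.leaf (.dia l A)]) C
  | diaR (G : LHedge) (l A) : LP G A → LP [.node l G] (.dia l A)
  | boxL (D : LCtx) (l A C) :
      LP (D.plug [.leaf A]) C → LP (D.plug [.node l [.leaf (.box l A)]]) C
  | boxR (G : LHedge) (l A) : LP [.node l G] A → LP G (.box l A)
  | empL (D : LCtx) (l C) : LP (D.plug [.node l []]) C → LP (D.plug [.leaf (.emp l)]) C
  | empR (l) : LP [.node l []] (.emp l)

def fgT : LTy → PTy
  | .prim p _ => .prim p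
  | .ldiv A B => .ldiv (fgT A) (fgT B)
  | .rdiv A B => .rdiv (fgT A) (fgT B)
  | .mul A B => .mul (fgT A) (fgT B)
  | .dia _ A => .dia (fgT A)
  | .box _ A => .box (fgT A)
  | .emp _ => .dia .one

mutual
def fgTr : LTree → PTree
  | .leaf A => .leaf (fgT A)
  | .node _ ts => .node (fgH ts)
def fgH : List LTree → List PTree
  | [] => []
  | t :: ts => fgTr t :: fgH ts
end

theorem fgH_append (X Y : LHedge) : fgH (X ++ Y) = fgH X ++ fgH Y := by
  induction X with
  | nil => simp [fgH]
  | cons t X ih => simp [fgH, ih]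

def fgC : LCtx → PCtx
  | .hole a b => .hole (fgH a) (fgH b)
  | .brk _ c a b => .brk (fgC c) (fgH a) (fgH b)

theorem fgH_plug (D : LCtx) (X : LHedge) : fgH (D.plug X) = (fgC D).plug (fgH X) := by
  induction D with
  | hole a b => simp [fgC, LCtx.plug, PCtx.plug, fgH_append]
  | brk l c a b ih => simp [fgC, LCtx.plug, PCtx.plug, fgH_append, fgH, fgTr, ih]

theorem LP.sound {H C} (h : LP H C) : PProvS1 (fgH H) (fgT C) := by
  induction h with
  | id p l => exact .id p
  | ldivL G D A B C _ _ ih1 ih2 =>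
    rw [fgH_plug] at ih2 ⊢
    rw [fgH_append]
    exact .ldivL _ _ _ _ _ ih1 ih2
  | ldivR P A B _ ih => exact .ldivR _ _ _ ih
  | rdivL G D A B C _ _ ih1 ih2 =>
    rw [fgH_plug] at ih2 ⊢
    exact .rdivL _ _ _ _ _ ih1 ih2
  | rdivR P A B _ ih =>
    rw [fgH_append] at ih
    exact .rdivR _ _ _ ih
  | mulL D A B C _ ih =>
    rw [fgH_plug] at ih ⊢
    exact .mulL _ _ _ _ ih
  | mulR G D A B _ _ ih1 ih2 =>
    rw [fgH_append]
    exact .mulR _ _ _ _ ih1 ih2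
  | diaL D l A C _ ih =>
    rw [fgH_plug] at ih ⊢
    exact .diaL _ _ _ ih
  | diaR G l A _ ih => exact .diaR _ _ ih
  | boxL D l A C _ ih =>
    rw [fgH_plug] at ih ⊢
    exact .boxL _ _ _ ih
  | boxR G l A _ ih => exact .boxR _ _ ih
  | empL D l C _ ih =>
    rw [fgH_plug] at ih ⊢
    apply PProvS1.diaL
    have := PProvS1.oneL ((fgC D).comp (.brk .nil [] [])) (fgT C)
      (by simpa [PCtx.plug_comp, PCtx.plug, fgH, fgTr] using ih)
    simpa [PCtx.plug_comp, PCtx.plug, fgH, fgTr] using this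
  | empR l => exact .diaR _ _ .oneR

/-! Inversion of the forgetful maps. -/

theorem fgTr_leaf {t A} (h : fgTr t = .leaf A) : ∃ A', t = .leaf A' ∧ fgT A' = A := by
  cases t with
  | leaf A' => exact ⟨A', rfl, by simpa [fgTr] using h⟩
  | node l ts => simp [fgTr] at h

theorem fgTr_node {t K} (h : fgTr t = .node K) : ∃ l K', t = .node l K' ∧ fgH K' = K := by
  cases t with
  | leaf A' => simp [fgTr] at h
  | node l ts => exact ⟨l, ts, rfl, by simpa [fgTr] using h⟩

theorem fgH_cons {H t X} (h : fgH H = t :: X) :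
    ∃ t' X', H = t' :: X' ∧ fgTr t' = t ∧ fgH X' = X := by
  cases H with
  | nil => simp [fgH] at h
  | cons t' X' =>
    simp only [fgH, List.cons.injEq] at h
    exact ⟨t', X', rfl, h.1, h.2⟩

theorem fgH_nil {H} (h : fgH H = []) : H = [] := by
  cases H with
  | nil => rfl
  | cons t' X' => simp [fgH] at h

theorem fgH_app {H X Y} (h : fgH H = X ++ Y) :
    ∃ X' Y', H = X' ++ Y' ∧ fgH X' = X ∧ fgH Y' = Y := by
  induction X generalizing H with
  | nil => exact ⟨[], H, rfl, by simp [fgH], h⟩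
  | cons t X ih =>
    obtain ⟨t', Z, rfl, h1, h2⟩ := fgH_cons h
    obtain ⟨X', Y', rfl, h3, h4⟩ := ih h2
    exact ⟨t' :: X', Y', rfl, by simp [fgH, h1, h3], h4⟩

theorem fgH_ctx {D : PCtx} {H X} (h : fgH H = D.plug X) :
    ∃ (D' : LCtx) (X' : LHedge), H = D'.plug X' ∧ fgC D' = D ∧ fgH X' = X := by
  induction D generalizing H with
  | hole a b =>
    obtain ⟨Y, b', rfl, h1, h2⟩ := fgH_app h
    obtain ⟨a', X', rfl, h3, h4⟩ := fgH_app h1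
    exact ⟨.hole a' b', X', rfl, by simp [fgC, h2, h3], h4⟩
  | brk c a b ih =>
    obtain ⟨a', Y, rfl, h1, h2⟩ := fgH_app h
    obtain ⟨t, b', rfl, h3, h4⟩ := fgH_cons h2
    obtain ⟨l, K', rfl, h5⟩ := fgTr_node h3
    obtain ⟨c', X', rfl, h6, h7⟩ := ih h5
    exact ⟨.brk l c' a' b', X', rfl, by simp [fgC, h1, h4, h6], h7⟩

theorem fgH_leaf1 {H A} (h : fgH H = [.leaf A]) : ∃ A', H = [.leaf A'] ∧ fgT A' = A := by
  obtain ⟨t, X, rfl, h1, h2⟩ := fgH_cons h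
  obtain ⟨A', rfl, h3⟩ := fgTr_leaf h1
  exact ⟨A', by rw [fgH_nil h2], h3⟩

theorem fgH_node1 {H K} (h : fgH H = [.node K]) : ∃ l K', H = [.node l K'] ∧ fgH K' = K := by
  obtain ⟨t, X, rfl, h1, h2⟩ := fgH_cons h
  obtain ⟨l, K', rfl, h3⟩ := fgTr_node h1
  exact ⟨l, K', by rw [fgH_nil h2], h3⟩

/-! Occurrence counts. -/

abbrev LKey := (ℕ × ℕ) ⊕ ℕ

def kidx : LKey → ℕ
  | .inl x => x.2
  | .inr l => l

def occ (k : LKey) : LTy → ℕ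
  | .prim p l => if k = .inl (p, l) then 1 else 0
  | .ldiv A B => occ k A + occ k B
  | .rdiv A B => occ k A + occ k B
  | .mul A B => occ k A + occ k B
  | .dia l A => (if k = .inr l then 1 else 0) + occ k A
  | .box l A => (if k = .inr l then 1 else 0) + occ k A
  | .emp l => if k = .inr l then 1 else 0

mutual
def occTr (k : LKey) : LTree → ℕ
  | .leaf A => occ k A
  | .node l ts => (if k = .inr l then 1 else 0) + occH k ts
def occH (k : LKey) : List LTree → ℕ
  | [] => 0
  | t :: ts => occTr k t + occH k ts
end

theorem occH_append (k) (X Y : LHedge) : occH k (X ++ Y) = occH k X + occH k Y := by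
  induction X with
  | nil => simp [occH]
  | cons t X ih => simp [occH, ih]; omega

def occC (k : LKey) : LCtx → ℕ
  | .hole a b => occH k a + occH k b
  | .brk l c a b => (if k = .inr l then 1 else 0) + occC k c + occH k a + occH k b

theorem occH_plug (k) (D : LCtx) (X : LHedge) : occH k (D.plug X) = occC k D + occH k X := by
  induction D with
  | hole a b => simp [occC, LCtx.plug, occH_append]; omega
  | brk l c a b ih => simp [occC, LCtx.plug, occH_append, occH, occTr, ih]; omega

theorem LP.parity {H C} (h : LP H C) (k) : (occH k H + occ k C) % 2 = 0 := by
  induction h <;> simp only [occH_plug, occH_append, occH, occTr, occ] at * <;> omega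

/-- Existence of arbitrarily fresh thin labelled versions of a sequent. -/
def Lift (H : PHedge) (C : PTy) : Prop :=
  ∀ N, ∃ H' C' M, N ≤ M ∧ LP H' C' ∧ fgH H' = H ∧ fgT C' = C ∧
    ∀ k, occH k H' + occ k C' ≤ 2 ∧ (¬ (N ≤ kidx k ∧ kidx k < M) → occH k H' + occ k C' = 0)

theorem ite_idx {k : LKey} {l : ℕ} :
    (if k = .inr l then 1 else 0) = 0 ∨ ((if k = .inr l then 1 else 0) = 1 ∧ kidx k = l) := by
  by_cases h : k = .inr l
  · right; subst h; simp [kidx]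
  · left; simp [h]

theorem lift_rules (ok : PTy → Prop) : ClosedRules ok Lift where
  id p _ N := by
    refine ⟨[.leaf (.prim p N)], .prim p N, N + 1, by omega, .id p N, by simp [fgH, fgTr, fgT],
      by simp [fgT], ?_⟩
    intro k
    simp only [occH, occTr, occ]
    by_cases h : k = .inl (p, N)
    · subst h; simp [kidx]
    · simp [h]
  ldivL G D A B C _ h1 h2 N := by
    obtain ⟨G', A', M, hM, hp, hG, hA, hk⟩ := h1 N
    obtain ⟨H', C', M2, hM2, hp2, hH, hC, hk2⟩ := h2 M
    obtain ⟨D', X', rfl, hD, hX⟩ := fgH_ctx hH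
    obtain ⟨B', rfl, hB⟩ := fgH_leaf1 hX
    refine ⟨_, C', M2, by omega, .ldivL G' D' A' B' C' hp hp2, ?_, hC, ?_⟩
    · simp [fgH_plug, fgH_append, fgH, fgTr, fgT, *]
    · intro k
      have a1 := hk k
      have a2 := hk2 k
      simp only [occH_plug, occH_append, occH, occTr, occ] at *
      omega
  ldivR P A B _ h N := by
    obtain ⟨H', C', M, hM, hp, hH, hC, hk⟩ := h N
    obtain ⟨t, P', rfl, h1, h2⟩ := fgH_cons hH
    obtain ⟨A', rfl, h3⟩ := fgTr_leaf h1
    refine ⟨P', _, M, hM, .ldivR _ _ _ hp, h2, by simp [fgT, *], ?_⟩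
    intro k
    have a1 := hk k
    simp only [occH_plug, occH_append, occH, occTr, occ] at *
    omega
  rdivL G D A B C _ h1 h2 N := by
    obtain ⟨G', A', M, hM, hp, hG, hA, hk⟩ := h1 N
    obtain ⟨H', C', M2, hM2, hp2, hH, hC, hk2⟩ := h2 M
    obtain ⟨D', X', rfl, hD, hX⟩ := fgH_ctx hH
    obtain ⟨B', rfl, hB⟩ := fgH_leaf1 hX
    refine ⟨_, C', M2, by omega, .rdivL G' D' A' B' C' hp hp2, ?_, hC, ?_⟩
    · simp [fgH_plug, fgH, fgTr, fgT, *]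
    · intro k
      have a1 := hk k
      have a2 := hk2 k
      simp only [occH_plug, occH_append, occH, occTr, occ] at *
      omega
  rdivR P A B _ h N := by
    obtain ⟨H', C', M, hM, hp, hH, hC, hk⟩ := h N
    obtain ⟨P', X, rfl, h1, h2⟩ := fgH_app hH
    obtain ⟨A', rfl, h3⟩ := fgH_leaf1 h2
    refine ⟨P', _, M, hM, .rdivR _ _ _ hp, h1, by simp [fgT, *], ?_⟩
    intro k
    have a1 := hk k
    simp only [occH_plug, occH_append, occH, occTr, occ] at *
    omega
  mulL D A B C _ h N := by
    obtain ⟨H', C', M, hM, hp, hH, hC, hk⟩ := h N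
    obtain ⟨D', X', rfl, hD, hX⟩ := fgH_ctx hH
    obtain ⟨t, Y, rfl, h1, h2⟩ := fgH_cons hX
    obtain ⟨A', rfl, hA⟩ := fgTr_leaf h1
    obtain ⟨B', rfl, hB⟩ := fgH_leaf1 h2
    refine ⟨_, C', M, hM, .mulL D' A' B' C' hp, ?_, hC, ?_⟩
    · simp [fgH_plug, fgH, fgTr, fgT, *]
    · intro k
      have a1 := hk k
      simp only [occH_plug, occH_append, occH, occTr, occ] at *
      omega
  mulR G H A B _ h1 h2 N := by
    obtain ⟨G', A', M, hM, hp, hG, hA, hk⟩ := h1 N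
    obtain ⟨H', C', M2, hM2, hp2, hH, hC, hk2⟩ := h2 M
    refine ⟨_, _, M2, by omega, .mulR _ _ _ _ hp hp2, by simp [fgH_append, *], by simp [fgT, *], ?_⟩
    intro k
    have a1 := hk k
    have a2 := hk2 k
    simp only [occH_plug, occH_append, occH, occTr, occ] at *
    omega
  diaL D A C _ _ h N := by
    obtain ⟨H', C', M, hM, hp, hH, hC, hk⟩ := h N
    obtain ⟨D', X', rfl, hD, hX⟩ := fgH_ctx hH
    obtain ⟨l, K, rfl, h1⟩ := fgH_node1 hX
    obtain ⟨A', rfl, hA⟩ := fgH_leaf1 h1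
    refine ⟨_, C', M, hM, .diaL D' l A' C' hp, ?_, hC, ?_⟩
    · simp [fgH_plug, fgH, fgTr, fgT, *]
    · intro k
      have a1 := hk k
      simp only [occH_plug, occH_append, occH, occTr, occ] at *
      omega
  diaR G A _ _ h N := by
    obtain ⟨H', C', M, hM, hp, hH, hC, hk⟩ := h (N + 1)
    refine ⟨_, _, M, by omega, .diaR _ N _ hp, by simp [fgH, fgTr, *], by simp [fgT, *], ?_⟩
    intro k
    have a1 := hk k
    have a2 := @ite_idx k N
    simp only [occH_plug, occH_append, occH, occTr, occ] at *
    omega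
  boxL D A C _ h N := by
    obtain ⟨H', C', M, hM, hp, hH, hC, hk⟩ := h (N + 1)
    obtain ⟨D', X', rfl, hD, hX⟩ := fgH_ctx hH
    obtain ⟨A', rfl, hA⟩ := fgH_leaf1 hX
    refine ⟨_, C', M, by omega, .boxL D' N A' C' hp, ?_, hC, ?_⟩
    · simp [fgH_plug, fgH, fgTr, fgT, *]
    · intro k
      have a1 := hk k
      have a2 := @ite_idx k N
      simp only [occH_plug, occH_append, occH, occTr, occ] at *
      omega
  boxR G A _ h N := by
    obtain ⟨H', C', M, hM, hp, hH, hC, hk⟩ := h N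
    obtain ⟨l, K, rfl, h1⟩ := fgH_node1 hH
    refine ⟨K, _, M, hM, .boxR _ _ _ hp, h1, by simp [fgT, *], ?_⟩
    intro k
    have a1 := hk k
    simp only [occH_plug, occH_append, occH, occTr, occ] at *
    omega
  empL D C _ h N := by
    obtain ⟨H', C', M, hM, hp, hH, hC, hk⟩ := h N
    obtain ⟨D', X', rfl, hD, hX⟩ := fgH_ctx hH
    obtain ⟨l, K, rfl, h1⟩ := fgH_node1 hX
    have h2 := fgH_nil h1
    subst h2
    refine ⟨_, C', M, hM, .empL D' l C' hp, ?_, hC, ?_⟩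
    · simp [fgH_plug, fgH, fgTr, fgT, *]
    · intro k
      have a1 := hk k
      simp only [occH_plug, occH_append, occH, occTr, occ] at *
      omega
  empR _ N := by
    refine ⟨_, _, N + 1, by omega, .empR N, by simp [fgH, fgTr], by simp [fgT], ?_⟩
    intro k
    have a2 := @ite_idx k N
    simp only [occH_plug, occH_append, occH, occTr, occ] at *
    omega

/-! ### Part 3 : interpolation -/

/-- Relative position of two subhedges `R` and `Δ` of the same hedge. -/
inductive Decomp (D G : LCtx) (R Δ : LHedge) : Prop where
  | inside (D' : LCtx) : Δ = D'.plug R → (∀ X, D.plug X = G.plug (D'.plug X)) → Decomp D G R Δ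
  | outside (G' : LCtx) : R = G'.plug Δ → (∀ X, G.plug X = D.plug (G'.plug X)) → Decomp D G R Δ
  | disj (K : LHedge → LHedge → LHedge) : (∀ X, D.plug X = K X Δ) → (∀ Y, G.plug Y = K R Y) →
      (∀ Y, ∃ D' : LCtx, ∀ X, K X Y = D'.plug X) → (∀ X, ∃ G' : LCtx, ∀ Y, K X Y = G'.plug Y) →
      Decomp D G R Δ
  | left (F : LCtx) (x y z : LHedge) : x ≠ [] → y ≠ [] → z ≠ [] → Δ = x ++ y → R = y ++ z →
      (∀ X, D.plug X = F.plug (x ++ X)) → (∀ Y, G.plug Y = F.plug (Y ++ z)) → Decomp D G R Δ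
  | right (F : LCtx) (x y z : LHedge) : x ≠ [] → y ≠ [] → z ≠ [] → R = x ++ y → Δ = y ++ z →
      (∀ X, D.plug X = F.plug (X ++ z)) → (∀ Y, G.plug Y = F.plug (x ++ Y)) → Decomp D G R Δ

theorem decomp_hh (p1 q1 p2 q2 R Δ : LHedge) (h : p1 ++ R ++ q1 = p2 ++ Δ ++ q2) :
    Decomp (.hole p1 q1) (.hole p2 q2) R Δ := by
  rw [List.append_assoc, List.append_assoc, List.append_eq_append_iff] at h
  rcases h with ⟨a, rfl, h⟩ | ⟨a, rfl, h⟩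
  · rw [List.append_eq_append_iff] at h
    rcases h with ⟨c, rfl, rfl⟩ | ⟨c, rfl, h⟩
    · exact .disj (fun X Y => p1 ++ X ++ (c ++ (Y ++ q2))) (fun X => rfl)
        (fun Y => by simp [LCtx.plug])
        (fun Y => ⟨.hole p1 (c ++ (Y ++ q2)), fun X => rfl⟩)
        (fun X => ⟨.hole (p1 ++ X ++ c) q2, fun Y => by simp [LCtx.plug]⟩)
    · symm at h
      rw [List.append_eq_append_iff] at h
      rcases h with ⟨d, rfl, rfl⟩ | ⟨d, rfl, rfl⟩
      · by_cases hc : c = []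
        · subst hc
          exact .disj (fun X Y => p1 ++ X ++ (Y ++ q2)) (fun X => by simp [LCtx.plug])
            (fun Y => by simp [LCtx.plug])
            (fun Y => ⟨.hole p1 (Y ++ q2), fun X => by simp [LCtx.plug]⟩)
            (fun X => ⟨.hole (p1 ++ X) q2, fun Y => by simp [LCtx.plug]⟩)
        by_cases ha : a = []
        · subst ha
          exact .inside (.hole [] d) (by simp [LCtx.plug]) (fun X => by simp [LCtx.plug])
        by_cases hd : d = []
        · subst hd
          exact .outside (.hole a []) (by simp [LCtx.plug]) (fun X => by simp [LCtx.plug])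
        exact .right (.hole p1 q2) a c d ha hc hd rfl rfl (fun X => by simp [LCtx.plug])
          (fun X => by simp [LCtx.plug])
      · exact .outside (.hole a d) (by simp [LCtx.plug]) (fun X => by simp [LCtx.plug])
  · rw [List.append_eq_append_iff] at h
    rcases h with ⟨c, rfl, rfl⟩ | ⟨c, rfl, h⟩
    · exact .disj (fun X Y => p2 ++ Y ++ (c ++ (X ++ q1))) (fun X => by simp [LCtx.plug])
        (fun Y => by simp [LCtx.plug])
        (fun Y => ⟨.hole (p2 ++ Y ++ c) q1, fun X => by simp [LCtx.plug]⟩)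
        (fun X => ⟨.hole p2 (c ++ (X ++ q1)), fun Y => by simp [LCtx.plug]⟩)
    · symm at h
      rw [List.append_eq_append_iff] at h
      rcases h with ⟨d, rfl, rfl⟩ | ⟨d, rfl, rfl⟩
      · by_cases hc : c = []
        · subst hc
          exact .disj (fun X Y => p2 ++ Y ++ (X ++ q1)) (fun X => by simp [LCtx.plug])
            (fun Y => by simp [LCtx.plug])
            (fun Y => ⟨.hole (p2 ++ Y) q1, fun X => by simp [LCtx.plug]⟩)
            (fun X => ⟨.hole p2 (X ++ q1), fun Y => by simp [LCtx.plug]⟩)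
        by_cases ha : a = []
        · subst ha
          exact .outside (.hole [] d) (by simp [LCtx.plug]) (fun X => by simp [LCtx.plug])
        by_cases hd : d = []
        · subst hd
          exact .inside (.hole a []) (by simp [LCtx.plug]) (fun X => by simp [LCtx.plug])
        exact .left (.hole p2 q1) a c d ha hc hd rfl rfl (fun X => by simp [LCtx.plug])
          (fun X => by simp [LCtx.plug])
      · exact .inside (.hole a d) (by simp [LCtx.plug]) (fun X => by simp [LCtx.plug])

theorem append_eq_cons_append {α : Type*} {p1 R q1 p2 q2 : List α} {t : α}
    (h : p1 ++ R ++ q1 = p2 ++ t :: q2) :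
    (∃ a, p1 = p2 ++ t :: a ∧ q2 = a ++ R ++ q1) ∨
    (∃ a b, R = a ++ t :: b ∧ p2 = p1 ++ a ∧ q2 = b ++ q1) ∨
    (∃ a, q1 = a ++ t :: q2 ∧ p2 = p1 ++ R ++ a) := by
  rw [List.append_eq_append_iff] at h
  rcases h with ⟨a, rfl, rfl⟩ | ⟨a, h, h2⟩
  · exact .inr (.inr ⟨a, rfl, rfl⟩)
  · cases a with
    | nil =>
      simp only [List.append_nil, List.nil_append] at h h2
      subst h h2
      exact .inr (.inr ⟨[], by simp, by simp⟩)
    | cons s a =>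
      simp only [List.cons_append, List.cons.injEq] at h2
      obtain ⟨rfl, rfl⟩ := h2
      rw [List.append_eq_append_iff] at h
      rcases h with ⟨b, rfl, rfl⟩ | ⟨b, rfl, h⟩
      · exact .inr (.inl ⟨b, a, rfl, rfl, rfl⟩)
      · cases b with
        | nil =>
          simp only [List.nil_append] at h
          subst h
          exact .inr (.inl ⟨[], a, rfl, by simp, rfl⟩)
        | cons s b =>
          simp only [List.cons_append, List.cons.injEq] at h
          obtain ⟨rfl, rfl⟩ := h
          exact .inl ⟨b, rfl, by simp⟩

theorem decomp (D G : LCtx) (R Δ : LHedge) (h : D.plug R = G.plug Δ) : Decomp D G R Δ := by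
  induction D generalizing G with
  | hole p1 q1 =>
    cases G with
    | hole p2 q2 => exact decomp_hh _ _ _ _ _ _ h
    | brk l c p2 q2 =>
      rcases append_eq_cons_append h with ⟨a, rfl, rfl⟩ | ⟨a, b, rfl, rfl, rfl⟩ | ⟨a, rfl, rfl⟩
      · exact .disj (fun X Y => p2 ++ .node l (c.plug Y) :: (a ++ X ++ q1))
          (fun X => by simp [LCtx.plug]) (fun Y => by simp [LCtx.plug])
          (fun Y => ⟨.hole (p2 ++ .node l (c.plug Y) :: a) q1, fun X => by simp [LCtx.plug]⟩)
          (fun X => ⟨.brk l c p2 (a ++ X ++ q1), fun Y => by simp [LCtx.plug]⟩)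
      · exact .outside (.brk l c a b) (by simp [LCtx.plug]) (fun X => by simp [LCtx.plug])
      · exact .disj (fun X Y => p1 ++ X ++ a ++ .node l (c.plug Y) :: q2)
          (fun X => by simp [LCtx.plug]) (fun Y => by simp [LCtx.plug])
          (fun Y => ⟨.hole p1 (a ++ .node l (c.plug Y) :: q2), fun X => by simp [LCtx.plug]⟩)
          (fun X => ⟨.brk l c (p1 ++ X ++ a) q2, fun Y => by simp [LCtx.plug]⟩)
  | brk l c p1 q1 ih =>
    cases G with
    | hole p2 q2 =>
      rcases append_eq_cons_append h.symm with
        ⟨a, rfl, rfl⟩ | ⟨a, b, rfl, rfl, rfl⟩ | ⟨a, rfl, rfl⟩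
      · exact .disj (fun X Y => p1 ++ .node l (c.plug X) :: (a ++ Y ++ q2))
          (fun X => by simp [LCtx.plug]) (fun Y => by simp [LCtx.plug])
          (fun Y => ⟨.brk l c p1 (a ++ Y ++ q2), fun X => by simp [LCtx.plug]⟩)
          (fun X => ⟨.hole (p1 ++ .node l (c.plug X) :: a) q2, fun Y => by simp [LCtx.plug]⟩)
      · exact .inside (.brk l c a b) (by simp [LCtx.plug]) (fun X => by simp [LCtx.plug])
      · exact .disj (fun X Y => p2 ++ Y ++ a ++ .node l (c.plug X) :: q1)
          (fun X => by simp [LCtx.plug]) (fun Y => by simp [LCtx.plug])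
          (fun Y => ⟨.brk l c (p2 ++ Y ++ a) q1, fun X => by simp [LCtx.plug]⟩)
          (fun X => ⟨.hole p2 (a ++ .node l (c.plug X) :: q1), fun Y => by simp [LCtx.plug]⟩)
    | brk l' c' p2 q2 =>
      have h' : p1 ++ [.node l (c.plug R)] ++ q1 = p2 ++ .node l' (c'.plug Δ) :: q2 := by
        simpa [LCtx.plug] using h
      rcases append_eq_cons_append h' with ⟨a, rfl, rfl⟩ | ⟨a, b, h1, rfl, rfl⟩ | ⟨a, rfl, rfl⟩
      · exact .disj (fun X Y => p2 ++ .node l' (c'.plug Y) :: (a ++ .node l (c.plug X) :: q1))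
          (fun X => by simp [LCtx.plug]) (fun Y => by simp [LCtx.plug])
          (fun Y => ⟨.brk l c (p2 ++ .node l' (c'.plug Y) :: a) q1, fun X => by simp [LCtx.plug]⟩)
          (fun X => ⟨.brk l' c' p2 (a ++ .node l (c.plug X) :: q1), fun Y => by simp [LCtx.plug]⟩)
      · cases a with
        | cons s a => simp at h1
        | nil =>
          simp only [List.nil_append, List.cons.injEq, LTree.node.injEq] at h1
          obtain ⟨⟨rfl, h1⟩, rfl⟩ := h1
          rcases ih c' h1 with ⟨D', e1, e2⟩ | ⟨G', e1, e2⟩ | ⟨K, e1, e2, e3, e4⟩ |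
            ⟨F, x, y, z, hx, hy, hz, e1, e2, e3, e4⟩ | ⟨F, x, y, z, hx, hy, hz, e1, e2, e3, e4⟩
          · exact .inside D' e1 (fun X => by simp [LCtx.plug, e2])
          · exact .outside G' e1 (fun X => by simp [LCtx.plug, e2])
          · refine .disj (fun X Y => p1 ++ .node l (K X Y) :: q1) (fun X => by simp [LCtx.plug, e1])
              (fun Y => by simp [LCtx.plug, e2]) (fun Y => ?_) (fun X => ?_)
            · obtain ⟨D', hD⟩ := e3 Y
              exact ⟨.brk l D' p1 q1, fun X => by simp [LCtx.plug, hD]⟩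
            · obtain ⟨D', hD⟩ := e4 X
              exact ⟨.brk l D' p1 q1, fun X => by simp [LCtx.plug, hD]⟩
          · exact .left (.brk l F p1 q1) x y z hx hy hz e1 e2 (fun X => by simp [LCtx.plug, e3])
              (fun X => by simp [LCtx.plug, e4])
          · exact .right (.brk l F p1 q1) x y z hx hy hz e1 e2 (fun X => by simp [LCtx.plug, e3])
              (fun X => by simp [LCtx.plug, e4])
      · exact .disj (fun X Y => p1 ++ .node l (c.plug X) :: (a ++ .node l' (c'.plug Y) :: q2))
          (fun X => by simp [LCtx.plug]) (fun Y => by simp [LCtx.plug])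
          (fun Y => ⟨.brk l c p1 (a ++ .node l' (c'.plug Y) :: q2), fun X => by simp [LCtx.plug]⟩)
          (fun X => ⟨.brk l' c' (p1 ++ .node l (c.plug X) :: a) q2, fun Y => by simp [LCtx.plug]⟩)

theorem LCtx.plug_ne_nil (D : LCtx) {X : LHedge} (h : X ≠ []) : D.plug X ≠ [] := by
  cases D <;> simp [LCtx.plug, h]

def LCtx.comp : LCtx → LCtx → LCtx
  | .hole a b, .hole c d => .hole (a ++ c) (d ++ b)
  | .hole a b, .brk l e c d => .brk l e (a ++ c) (d ++ b)
  | .brk l e a b, f => .brk l (e.comp f) a b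

theorem LCtx.plug_comp (D E : LCtx) (X : LHedge) : (D.comp E).plug X = D.plug (E.plug X) := by
  induction D with
  | hole a b => cases E <;> simp [LCtx.comp, LCtx.plug]
  | brk l e a b ih => simp [LCtx.comp, LCtx.plug, ih]

theorem plug_singleton {G : LCtx} {Δ : LHedge} {t : LTree} (h : [t] = G.plug Δ) (hΔ : Δ ≠ []) :
    (Δ = [t] ∧ ∀ X, G.plug X = X) ∨ 
      (∃ (l : ℕ) (c : LCtx), t = .node l (c.plug Δ) ∧ ∀ X, G.plug X = [.node l (c.plug X)]) := by
  cases G with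
  | hole a b =>
    left
    have hl := congrArg List.length h
    simp [LCtx.plug] at hl
    have := List.length_pos_iff.mpr hΔ
    have ha : a = [] := List.length_eq_zero_iff.mp (by omega)
    have hb : b = [] := List.length_eq_zero_iff.mp (by omega)
    subst ha hb
    simp only [LCtx.plug, List.nil_append, List.append_nil] at h
    exact ⟨h.symm, fun X => by simp [LCtx.plug]⟩
  | brk l c a b =>
    right
    have hl := congrArg List.length h
    simp only [LCtx.plug, List.length_append, List.length_cons, List.length_nil] at hl
    have ha : a = [] := List.length_eq_zero_iff.mp (by omega)
    have hb : b = [] := List.length_eq_zero_iff.mp (by omega)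
    subst ha hb
    simp only [LCtx.plug, List.nil_append, List.cons.injEq, and_true] at h
    exact ⟨l, c, h, fun X => by simp [LCtx.plug]⟩

/-- Interpolants. -/
def Itp (G : LCtx) (Δ : LHedge) (C : LTy) : Prop :=
  ∃ E, LP Δ E ∧ LP (G.plug [.leaf E]) C ∧
    ∀ k, occ k E ≤ occH k Δ ∧ occ k E ≤ occC k G + occ k C

/-- All interpolants of a sequent exist. -/
def AllItp (H : LHedge) (C : LTy) : Prop :=
  ∀ (G : LCtx) (Δ : LHedge), H = G.plug Δ → Δ ≠ [] → Itp G Δ C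

/-- Interpolation is preserved by one-premise left rules whose redex is the singleton `[t]`,
except when `Δ` lies strictly inside `t`. -/
theorem itp_unary {D : LCtx} {R' : LHedge} {t : LTree} {C : LTy} (hR' : R' ≠ [])
    (rule : ∀ (D : LCtx) C, LP (D.plug R') C → LP (D.plug [t]) C)
    (hocc : ∀ k, occH k R' ≤ occTr k t)
    (ih : AllItp (D.plug R') C)
    (hin : ∀ (l : ℕ) (c : LCtx) (Δ : LHedge), Δ ≠ [] → t = .node l (c.plug Δ) →
      Itp (D.comp (.brk l c [] [])) Δ C) : AllItp (D.plug [t]) C := by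
  intro G Δ h hΔ
  have key : ∀ (D' : LCtx), Δ = D'.plug [t] → (∀ X, D.plug X = G.plug (D'.plug X)) →
      Itp G Δ C := by
    intro D' e1 e2
    obtain ⟨E, p1, p2, hk⟩ := ih G (D'.plug R') (e2 _) (D'.plug_ne_nil hR')
    refine ⟨E, e1 ▸ rule _ _ p1, p2, fun k => ?_⟩
    have a1 := hk k
    have a2 := hocc k
    subst e1
    simp only [occH_plug, occH] at *
    omega
  rcases decomp D G [t] Δ h with ⟨D', e1, e2⟩ | ⟨G', e1, e2⟩ | ⟨K, e1, e2, e3, e4⟩ |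
            ⟨F, x, y, z, hx, hy, hz, e1, e2, e3, e4⟩ | ⟨F, x, y, z, hx, hy, hz, e1, e2, e3, e4⟩
  · exact key D' e1 e2
  · rcases plug_singleton e1 hΔ with ⟨h1, h2⟩ | ⟨l, c, h1, h2⟩
    · exact key .nil (by simp [LCtx.plug, h1]) (fun X => by simp [e2, h2, LCtx.plug])
    · obtain ⟨E, p1, p2, hk⟩ := hin l c Δ hΔ h1
      have e5 : ∀ X, G.plug X = (D.comp (.brk l c [] [])).plug X := by
        intro X; rw [e2, h2, LCtx.plug_comp]; rfl
      refine ⟨E, p1, e5 _ ▸ p2, fun k => ?_⟩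
      have a1 := hk k
      have a2 := congrArg (occH k) (e5 [])
      simp only [occH_plug, occH] at *
      omega
  · obtain ⟨G', hG'⟩ := e4 R'
    obtain ⟨E, p1, p2, hk⟩ := ih G' Δ (by rw [e1, hG']) hΔ
    obtain ⟨D', hD'⟩ := e3 [.leaf E]
    refine ⟨E, p1, ?_, fun k => ?_⟩
    · rw [e2, hD']
      apply rule
      rwa [← hD', hG']
    · have a1 := hk k
      have a2 := hocc k
      have a3 := congrArg (occH k) h
      have a4 := congrArg (occH k) (e1 R')
      rw [hG'] at a4
      simp only [occH_plug, occH] at *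
      omega
  · have := congrArg List.length e2
    have h1 := List.length_pos_iff.mpr hy
    have h2 := List.length_pos_iff.mpr hz
    simp at this; omega
  · have := congrArg List.length e1
    have h1 := List.length_pos_iff.mpr hy
    have h2 := List.length_pos_iff.mpr hx
    simp at this; omega


theorem append_singleton_cases {α : Type*} {G z y : List α} {t : α} (h : y ++ z = G ++ [t]) :
    (z = [] ∧ y = G ++ [t]) ∨ ∃ z', z = z' ++ [t] ∧ G = y ++ z' := by
  rcases List.eq_nil_or_concat z with rfl | ⟨z', s, rfl⟩
  · left; simpa using h
  · right
    rw [List.concat_eq_append, ← List.append_assoc] at h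
    have := List.append_inj' h rfl
    refine ⟨z', ?_, this.1.symm⟩
    rw [List.concat_eq_append, this.2]

theorem singleton_append_cases {α : Type*} {G z y : List α} {t : α} (h : y ++ z = t :: G) :
    (y = [] ∧ z = t :: G) ∨ ∃ y', y = t :: y' ∧ G = y' ++ z := by
  cases y with
  | nil => left; simpa using h
  | cons s y =>
    simp only [List.cons_append, List.cons.injEq] at h
    obtain ⟨rfl, rfl⟩ := h
    exact .inr ⟨y, rfl, rfl⟩

theorem itp_ldivL {G1 : LHedge} {D : LCtx} {A B C : LTy} (q1 : LP G1 A)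
    (q2 : LP (D.plug [.leaf B]) C)
    (ih1 : AllItp G1 A) (ih2 : AllItp (D.plug [.leaf B]) C) :
    AllItp (D.plug (G1 ++ [.leaf (.ldiv A B)])) C := by
  intro G Δ h hΔ
  have inside : ∀ (D' : LCtx), Δ = D'.plug (G1 ++ [.leaf (.ldiv A B)]) →
      (∀ X, D.plug X = G.plug (D'.plug X)) → Itp G Δ C := by
    intro D' e1 e2
    obtain ⟨E, p1, p2, hk⟩ := ih2 G (D'.plug [.leaf B]) (e2 _) (D'.plug_ne_nil (by simp))
    refine ⟨E, e1 ▸ LP.ldivL _ _ _ _ _ q1 p1, p2, fun k => ?_⟩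
    have a1 := hk k
    subst e1
    simp only [occH_plug, occH_append, occH, occTr, occ] at *
    omega
  have right : ∀ (F : LCtx) (x y z : LHedge), x ≠ [] → G1 = x ++ y →
      Δ = y ++ [.leaf (.ldiv A B)] ++ z → (∀ X, D.plug X = F.plug (X ++ z)) →
      (∀ X, G.plug X = F.plug (x ++ X)) → Itp G Δ C := by
    intro F x y z hx e1 e2 e3 e4
    subst e1 e2
    obtain ⟨E1, p1, p2, hk1⟩ := ih1 (.hole [] y) x (by simp [LCtx.plug]) hx
    obtain ⟨E2, p3, p4, hk2⟩ := ih2 F ([.leaf B] ++ z) (e3 _) (by simp)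
    refine ⟨.ldiv E1 E2, ?_, ?_, fun k => ?_⟩
    · apply LP.ldivR
      have := LP.ldivL _ (.hole [] z) A B E2 p2 p3
      simpa [LCtx.plug] using this
    · rw [e4]
      exact LP.ldivL _ _ _ _ _ p1 p4
    · have a1 := hk1 k
      have a2 := hk2 k
      have a3 := congrArg (occH k) (e3 [])
      have a4 := congrArg (occH k) (e4 [])
      simp only [occH_plug, occH_append, occH, occTr, occ, occC] at *
      omega
  rcases decomp D G _ Δ h with ⟨D', e1, e2⟩ | ⟨G', e1, e2⟩ | ⟨K, e1, e2, e3, e4⟩ |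
            ⟨F, x, y, z, hx, hy, hz, e1, e2, e3, e4⟩ | ⟨F, x, y, z, hx, hy, hz, e1, e2, e3, e4⟩
  · exact inside D' e1 e2
  · have sub : ∀ (G'' : LCtx), G1 = G''.plug Δ →
        (∀ X, G'.plug X = G''.plug X ++ [.leaf (.ldiv A B)]) → Itp G Δ C := by
      intro G'' g1 g2
      obtain ⟨E, p1, p2, hk⟩ := ih1 G'' Δ g1 hΔ
      refine ⟨E, p1, ?_, fun k => ?_⟩
      · rw [e2, g2]
        exact LP.ldivL _ _ _ _ _ p2 q2
      · have a1 := hk k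
        have a3 := congrArg (occH k) (e2 [])
        have a4 := congrArg (occH k) (g2 [])
        simp only [occH_plug, occH_append, occH, occTr, occ, occC] at *
        omega
    cases G' with
    | hole a b =>
      rcases append_singleton_cases (y := a ++ Δ) (z := b) e1.symm with ⟨rfl, h1⟩ | ⟨b', rfl, rfl⟩
      · rcases append_singleton_cases h1 with ⟨h2, -⟩ | ⟨Δ', rfl, rfl⟩
        · exact absurd h2 hΔ
        · by_cases ha : a = []
          · subst ha
            exact inside .nil (by simp [LCtx.plug]) (fun X => by simp [e2, LCtx.plug])
          · exact right D a Δ' [] ha rfl (by simp) (fun X => by simp)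
              (fun X => by simp [e2, LCtx.plug])
      · exact sub (.hole a b') rfl (fun X => by simp [LCtx.plug])
    | brk l c a b =>
      rcases append_singleton_cases (y := a ++ [.node l (c.plug Δ)]) (z := b)
        (by simpa [LCtx.plug] using e1.symm) with ⟨rfl, h1⟩ | ⟨b', rfl, rfl⟩
      · have := List.append_inj' h1 rfl
        simp at this
      · exact sub (.brk l c a b') (by simp [LCtx.plug]) (fun X => by simp [LCtx.plug])
  · obtain ⟨G', hG'⟩ := e4 [.leaf B]
    obtain ⟨E, p1, p2, hk⟩ := ih2 G' Δ (by rw [e1, hG']) hΔ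
    obtain ⟨D', hD'⟩ := e3 [.leaf E]
    refine ⟨E, p1, ?_, fun k => ?_⟩
    · rw [e2, hD']
      apply LP.ldivL _ _ _ _ _ q1
      rwa [← hD', hG']
    · have a1 := hk k
      have a3 := congrArg (occH k) h
      have a4 := congrArg (occH k) (e1 [.leaf B])
      rw [hG'] at a4
      simp only [occH_plug, occH_append, occH, occTr, occ] at *
      omega
  · rcases append_singleton_cases e2.symm with ⟨h2, -⟩ | ⟨z', rfl, rfl⟩
    · exact absurd h2 hz
    · subst e1
      obtain ⟨E1, p1, p2, hk1⟩ := ih1 (.hole [] z') y (by simp [LCtx.plug]) hy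
      obtain ⟨E2, p3, p4, hk2⟩ := ih2 (F.comp (.hole [] [.leaf B])) x
        (by simp [e3, LCtx.plug_comp, LCtx.plug]) hx
      refine ⟨.mul E2 E1, LP.mulR _ _ _ _ p3 p1, ?_, fun k => ?_⟩
      · have r1 := LP.ldivL _ (F.comp (.hole [.leaf E2] [])) A B C p2
          (by simpa [LCtx.plug_comp, LCtx.plug] using p4)
        have r2 := LP.mulL (F.comp (.hole [] (z' ++ [.leaf (.ldiv A B)]))) E2 E1 C
          (by simpa [LCtx.plug_comp, LCtx.plug] using r1)
        simpa [e4, LCtx.plug_comp, LCtx.plug] using r2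
      · have a1 := hk1 k
        have a2 := hk2 k
        have a3 := congrArg (occH k) (e3 [])
        have a4 := congrArg (occH k) (e4 [])
        have a5 := congrArg (occH k) (F.plug_comp (.hole [] [.leaf B]) [])
        simp only [occH_plug, occH_append, occH, occTr, occ, occC] at *
        omega
  · rcases append_singleton_cases e1.symm with ⟨h2, -⟩ | ⟨y', rfl, h2⟩
    · exact absurd h2 hy
    · exact right F x y' z hx h2 e2 e3 e4

theorem itp_rdivL {G1 : LHedge} {D : LCtx} {A B C : LTy} (q1 : LP G1 A)
    (q2 : LP (D.plug [.leaf B]) C)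
    (ih1 : AllItp G1 A) (ih2 : AllItp (D.plug [.leaf B]) C) :
    AllItp (D.plug (.leaf (.rdiv B A) :: G1)) C := by
  intro G Δ h hΔ
  have inside : ∀ (D' : LCtx), Δ = D'.plug (.leaf (.rdiv B A) :: G1) →
      (∀ X, D.plug X = G.plug (D'.plug X)) → Itp G Δ C := by
    intro D' e1 e2
    obtain ⟨E, p1, p2, hk⟩ := ih2 G (D'.plug [.leaf B]) (e2 _) (D'.plug_ne_nil (by simp))
    refine ⟨E, e1 ▸ LP.rdivL _ _ _ _ _ q1 p1, p2, fun k => ?_⟩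
    have a1 := hk k
    subst e1
    simp only [occH_plug, occH_append, occH, occTr, occ] at *
    omega
  have left : ∀ (F : LCtx) (x y z : LHedge), z ≠ [] → G1 = y ++ z →
      Δ = x ++ .leaf (.rdiv B A) :: y → (∀ X, D.plug X = F.plug (x ++ X)) →
      (∀ X, G.plug X = F.plug (X ++ z)) → Itp G Δ C := by
    intro F x y z hz e1 e2 e3 e4
    subst e1 e2
    obtain ⟨E1, p1, p2, hk1⟩ := ih1 (.hole y []) z (by simp [LCtx.plug]) hz
    obtain ⟨E2, p3, p4, hk2⟩ := ih2 F (x ++ [.leaf B]) (e3 _) (by simp)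
    refine ⟨.rdiv E2 E1, ?_, ?_, fun k => ?_⟩
    · apply LP.rdivR
      have := LP.rdivL _ (.hole x []) A B E2 p2 (by simpa [LCtx.plug] using p3)
      simpa [LCtx.plug] using this
    · rw [e4]
      exact LP.rdivL _ _ _ _ _ p1 p4
    · have a1 := hk1 k
      have a2 := hk2 k
      have a3 := congrArg (occH k) (e3 [])
      have a4 := congrArg (occH k) (e4 [])
      simp only [occH_plug, occH_append, occH, occTr, occ, occC] at *
      omega
  rcases decomp D G _ Δ h with ⟨D', e1, e2⟩ | ⟨G', e1, e2⟩ | ⟨K, e1, e2, e3, e4⟩ |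
            ⟨F, x, y, z, hx, hy, hz, e1, e2, e3, e4⟩ | ⟨F, x, y, z, hx, hy, hz, e1, e2, e3, e4⟩
  · exact inside D' e1 e2
  · have sub : ∀ (G'' : LCtx), G1 = G''.plug Δ →
        (∀ X, G'.plug X = .leaf (.rdiv B A) :: G''.plug X) → Itp G Δ C := by
      intro G'' g1 g2
      obtain ⟨E, p1, p2, hk⟩ := ih1 G'' Δ g1 hΔ
      refine ⟨E, p1, ?_, fun k => ?_⟩
      · rw [e2, g2]
        exact LP.rdivL _ _ _ _ _ p2 q2
      · have a1 := hk k
        have a3 := congrArg (occH k) (e2 [])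
        have a4 := congrArg (occH k) (g2 [])
        simp only [occH_plug, occH_append, occH, occTr, occ, occC] at *
        omega
    cases G' with
    | hole a b =>
      rcases singleton_append_cases (y := a) (z := Δ ++ b)
        (by simpa [LCtx.plug] using e1.symm) with ⟨rfl, h1⟩ | ⟨b', rfl, rfl⟩
      · rcases singleton_append_cases h1 with ⟨h2, -⟩ | ⟨Δ', rfl, rfl⟩
        · exact absurd h2 hΔ
        · by_cases hb : b = []
          · subst hb
            exact inside .nil (by simp [LCtx.plug]) (fun X => by simp [e2, LCtx.plug])
          · exact left D [] Δ' b hb rfl (by simp) (fun X => by simp)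
              (fun X => by simp [e2, LCtx.plug])
      · exact sub (.hole b' b) (by simp [LCtx.plug]) (fun X => by simp [LCtx.plug])
    | brk l c a b =>
      rcases singleton_append_cases (y := a) (z := .node l (c.plug Δ) :: b)
        (by simpa [LCtx.plug] using e1.symm) with ⟨rfl, h1⟩ | ⟨b', rfl, rfl⟩
      · simp at h1
      · exact sub (.brk l c b' b) (by simp [LCtx.plug]) (fun X => by simp [LCtx.plug])
  · obtain ⟨G', hG'⟩ := e4 [.leaf B]
    obtain ⟨E, p1, p2, hk⟩ := ih2 G' Δ (by rw [e1, hG']) hΔ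
    obtain ⟨D', hD'⟩ := e3 [.leaf E]
    refine ⟨E, p1, ?_, fun k => ?_⟩
    · rw [e2, hD']
      apply LP.rdivL _ _ _ _ _ q1
      rwa [← hD', hG']
    · have a1 := hk k
      have a3 := congrArg (occH k) h
      have a4 := congrArg (occH k) (e1 [.leaf B])
      rw [hG'] at a4
      simp only [occH_plug, occH_append, occH, occTr, occ] at *
      omega
  · rcases singleton_append_cases e2.symm with ⟨h2, -⟩ | ⟨y', rfl, h2⟩
    · exact absurd h2 hy
    · exact left F x y' z hz h2 e1 e3 e4
  · rcases singleton_append_cases e1.symm with ⟨h2, -⟩ | ⟨x', rfl, rfl⟩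
    · exact absurd h2 hx
    · subst e2
      obtain ⟨E1, p1, p2, hk1⟩ := ih1 (.hole x' []) y (by simp [LCtx.plug]) hy
      obtain ⟨E2, p3, p4, hk2⟩ := ih2 (F.comp (.hole [.leaf B] [])) z
        (by simp [e3, LCtx.plug_comp, LCtx.plug]) hz
      refine ⟨.mul E1 E2, LP.mulR _ _ _ _ p1 p3, ?_, fun k => ?_⟩
      · have r1 := LP.rdivL _ (F.comp (.hole [] [.leaf E2])) A B C p2
          (by simpa [LCtx.plug_comp, LCtx.plug] using p4)
        have r2 := LP.mulL (F.comp (.hole (.leaf (.rdiv B A) :: x') [])) E1 E2 C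
          (by simpa [LCtx.plug_comp, LCtx.plug] using r1)
        simpa [e4, LCtx.plug_comp, LCtx.plug] using r2
      · have a1 := hk1 k
        have a2 := hk2 k
        have a3 := congrArg (occH k) (e3 [])
        have a4 := congrArg (occH k) (e4 [])
        have a5 := congrArg (occH k) (F.plug_comp (.hole [.leaf B] []) [])
        simp only [occH_plug, occH_append, occH, occTr, occ, occC] at *
        omega

theorem occC_comp (k) (D E : LCtx) : occC k (D.comp E) = occC k D + occC k E := by
  have := congrArg (occH k) (D.plug_comp E [])
  simp only [occH_plug, occH] at this
  omega

theorem interp {H C} (h : LP H C) : AllItp H C := by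
  induction h with
  | id p l =>
    intro G Δ h hΔ
    rcases plug_singleton h hΔ with ⟨rfl, h2⟩ | ⟨l, c, h1, h2⟩
    · refine ⟨.prim p l, .id _ _, by rw [h2]; exact .id _ _, fun k => ?_⟩
      simp only [occH, occTr, occ]
      omega
    · simp at h1
  | ldivL G D A B C q1 q2 ih1 ih2 => exact itp_ldivL q1 q2 ih1 ih2
  | rdivL G D A B C q1 q2 ih1 ih2 => exact itp_rdivL q1 q2 ih1 ih2
  | ldivR P A B q ih =>
    intro G Δ h hΔ
    obtain ⟨E, p1, p2, hk⟩ := ih ((LCtx.hole [.leaf A] []).comp G) Δ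
      (by simp [LCtx.plug_comp, LCtx.plug, h]) hΔ
    refine ⟨E, p1, .ldivR _ _ _ (by simpa [LCtx.plug_comp, LCtx.plug] using p2), fun k => ?_⟩
    have := hk k
    simp only [occC_comp, occC, occH, occTr, occ] at *
    omega
  | rdivR P A B q ih =>
    intro G Δ h hΔ
    obtain ⟨E, p1, p2, hk⟩ := ih ((LCtx.hole [] [.leaf A]).comp G) Δ
      (by simp [LCtx.plug_comp, LCtx.plug, h]) hΔ
    refine ⟨E, p1, .rdivR _ _ _ (by simpa [LCtx.plug_comp, LCtx.plug] using p2), fun k => ?_⟩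
    have := hk k
    simp only [occC_comp, occC, occH, occTr, occ] at *
    omega
  | mulL D A B C q ih =>
    refine itp_unary (R' := [.leaf A, .leaf B]) (by simp) (fun D C => LP.mulL D A B C)
      (fun k => by simp [occH, occTr, occ]) ih ?_
    intro l c Δ _ h
    simp at h
  | diaL D l A C q ih =>
    refine itp_unary (R' := [.node l [.leaf A]]) (by simp) (fun D C => LP.diaL D l A C)
      (fun k => by simp [occH, occTr, occ]) ih ?_
    intro l c Δ _ h
    simp at h
  | empL D l C q ih =>
    refine itp_unary (R' := [.node l []]) (by simp) (fun D C => LP.empL D l C)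
      (fun k => by simp [occH, occTr, occ]) ih ?_
    intro l c Δ _ h
    simp at h
  | boxL D l A C q ih =>
    refine itp_unary (R' := [.leaf A]) (by simp) (fun D C => LP.boxL D l A C)
      (fun k => by simp only [occH, occTr, occ]; omega) ih ?_
    intro l' c Δ hΔ h
    simp only [LTree.node.injEq] at h
    obtain ⟨rfl, h⟩ := h
    rcases plug_singleton h hΔ with ⟨rfl, h2⟩ | ⟨l, c, h1, h2⟩
    · obtain ⟨E, p1, p2, hk⟩ := ih D [.leaf A] rfl (by simp)
      refine ⟨.box l E, ?_, ?_, fun k => ?_⟩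
      · exact .boxR _ _ _ (by simpa [LCtx.plug] using LP.boxL .nil l A E (by simpa [LCtx.plug] using p1))
      · simpa [LCtx.plug_comp, LCtx.plug, h2] using LP.boxL D l E C p2
      · have a1 := hk k
        have a2 := congrArg (occH k) (h2 [])
        simp only [occC_comp, occH_plug, occC, occH, occTr, occ] at *
        omega
    · simp at h1
  | diaR H l A q ih =>
    intro G Δ h hΔ
    rcases plug_singleton h hΔ with ⟨rfl, h2⟩ | ⟨l', c, h1, h2⟩
    · by_cases hH : H = []
      · subst hH
        refine ⟨.emp l, .empR l, ?_, fun k => ?_⟩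
        · rw [h2]
          exact LP.empL .nil l _ (LP.diaR _ _ _ q)
        · have a2 := congrArg (occH k) (h2 [])
          simp only [occC_comp, occH_plug, occC, occH, occTr, occ] at *
          omega
      · obtain ⟨E, p1, p2, hk⟩ := ih .nil H (by simp [LCtx.plug]) hH
        refine ⟨.dia l E, .diaR _ _ _ p1, ?_, fun k => ?_⟩
        · rw [h2]
          exact LP.diaL .nil l E _ (LP.diaR _ _ _ (by simpa [LCtx.plug] using p2))
        · have a1 := hk k
          have a2 := congrArg (occH k) (h2 [])
          simp only [occC_comp, occH_plug, occC, occH, occTr, occ] at *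
          omega
    · simp only [LTree.node.injEq] at h1
      obtain ⟨rfl, rfl⟩ := h1
      obtain ⟨E, p1, p2, hk⟩ := ih c Δ rfl hΔ
      refine ⟨E, p1, h2 _ ▸ LP.diaR _ _ _ p2, fun k => ?_⟩
      have a1 := hk k
      have a2 := congrArg (occH k) (h2 [])
      simp only [occC_comp, occH_plug, occC, occH, occTr, occ] at *
      omega
  | empR l =>
    intro G Δ h hΔ
    rcases plug_singleton h hΔ with ⟨rfl, h2⟩ | ⟨l', c, h1, h2⟩
    · refine ⟨.emp l, .empR l, ?_, fun k => ?_⟩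
      · rw [h2]
        exact LP.empL .nil l _ (LP.empR _)
      · have a2 := congrArg (occH k) (h2 [])
        simp only [occC_comp, occH_plug, occC, occH, occTr, occ] at *
        omega
    · simp only [LTree.node.injEq] at h1
      exact absurd h1.2.symm (c.plug_ne_nil hΔ)
  | boxR H l A q ih =>
    intro G Δ h hΔ
    obtain ⟨E, p1, p2, hk⟩ := ih (.brk l G [] []) Δ (by simp [LCtx.plug, h]) hΔ
    refine ⟨E, p1, .boxR _ _ _ (by simpa [LCtx.plug] using p2), fun k => ?_⟩
    have := hk k
    simp only [occC_comp, occC, occH, occTr, occ] at *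
    omega
  | mulR G1 G2 A B q1 q2 ih1 ih2 =>
    intro G Δ h hΔ
    have inl : ∀ G' : LCtx, G1 = G'.plug Δ → (∀ X, G.plug X = G'.plug X ++ G2) →
        Itp G Δ (.mul A B) := by
      intro G' e1 e2
      obtain ⟨E, p1, p2, hk⟩ := ih1 G' Δ e1 hΔ
      refine ⟨E, p1, e2 _ ▸ LP.mulR _ _ _ _ p2 q2, fun k => ?_⟩
      have a1 := hk k
      have a2 := congrArg (occH k) (e2 [])
      simp only [occH_append, occH_plug, occC, occH, occTr, occ] at *
      omega
    have inr : ∀ G' : LCtx, G2 = G'.plug Δ → (∀ X, G.plug X = G1 ++ G'.plug X) →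
        Itp G Δ (.mul A B) := by
      intro G' e1 e2
      obtain ⟨E, p1, p2, hk⟩ := ih2 G' Δ e1 hΔ
      refine ⟨E, p1, e2 _ ▸ LP.mulR _ _ _ _ q1 p2, fun k => ?_⟩
      have a1 := hk k
      have a2 := congrArg (occH k) (e2 [])
      simp only [occH_append, occH_plug, occC, occH, occTr, occ] at *
      omega
    cases G with
    | brk l c a b =>
      rcases append_eq_cons_append (p1 := []) (R := G1) (q1 := G2) h with
        ⟨x, h1, -⟩ | ⟨x, y, rfl, rfl, rfl⟩ | ⟨x, rfl, rfl⟩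
      · simp at h1
      · exact inl (.brk l c a y) (by simp [LCtx.plug]) (fun X => by simp [LCtx.plug])
      · exact inr (.brk l c x b) rfl (fun X => by simp [LCtx.plug])
    | hole a b =>
      simp only [LCtx.plug, List.append_assoc] at h
      rw [List.append_eq_append_iff] at h
      rcases h with ⟨x, rfl, rfl⟩ | ⟨x, rfl, h⟩
      · exact inr (.hole x b) (by simp [LCtx.plug]) (fun X => by simp [LCtx.plug])
      · rw [List.append_eq_append_iff] at h
        rcases h with ⟨y, rfl, rfl⟩ | ⟨y, rfl, rfl⟩
        · exact inl (.hole a y) (by simp [LCtx.plug]) (fun X => by simp [LCtx.plug])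
        · by_cases hx : x = []
          · subst hx
            exact inr (.hole [] b) (by simp [LCtx.plug]) (fun X => by simp [LCtx.plug])
          by_cases hy : y = []
          · subst hy
            exact inl (.hole a []) (by simp [LCtx.plug]) (fun X => by simp [LCtx.plug])
          obtain ⟨E1, p1, p2, hk1⟩ := ih1 (.hole a []) x (by simp [LCtx.plug]) hx
          obtain ⟨E2, p3, p4, hk2⟩ := ih2 (.hole [] b) y (by simp [LCtx.plug]) hy
          refine ⟨.mul E1 E2, .mulR _ _ _ _ p1 p3, ?_, fun k => ?_⟩
          · apply LP.mulL
            simpa [LCtx.plug] using LP.mulR _ _ _ _ p2 p4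
          · have a1 := hk1 k
            have a2 := hk2 k
            simp only [occH_append, occH_plug, occC, occH, occTr, occ] at *
            omega

/-! ### Part 4 : group valuations and the binary reduction lemma -/

section Val
variable {K : Type} [Group K] (v : LKey → K)

def valT : LTy → K
  | .prim p l => v (.inl (p, l))
  | .ldiv A B => (valT A)⁻¹ * valT B
  | .rdiv B A => valT B * (valT A)⁻¹
  | .mul A B => valT A * valT B
  | .dia l A => v (.inr l) * valT A
  | .box l A => (v (.inr l))⁻¹ * valT A
  | .emp l => v (.inr l)

mutual
def valTr : LTree → K
  | .leaf A => valT v A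
  | .node l ts => v (.inr l) * valH ts
def valH : List LTree → K
  | [] => 1
  | t :: ts => valTr t * valH ts
end

theorem valH_append (X Y : LHedge) : valH v (X ++ Y) = valH v X * valH v Y := by
  induction X with
  | nil => simp [valH]
  | cons t X ih => simp [valH, ih, mul_assoc]

theorem valH_plug (D : LCtx) {X Y : LHedge} (h : valH v X = valH v Y) :
    valH v (D.plug X) = valH v (D.plug Y) := by
  induction D with
  | hole a b => simp [LCtx.plug, valH_append, h]
  | brk l c a b ih => simp [LCtx.plug, valH_append, valH, valTr, ih]

theorem LP.val {H C} (h : LP H C) : valH v H = valT v C := by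
  induction h with
  | id p l => simp [valH, valTr, valT]
  | ldivL G D A B C _ _ ih1 ih2 =>
    rw [← ih2]
    apply valH_plug
    simp [valH_append, valH, valTr, valT, ih1]
  | ldivR P A B _ ih => simp [valT, ← ih, valH, valTr]
  | rdivL G D A B C _ _ ih1 ih2 =>
    rw [← ih2]
    apply valH_plug
    simp [valH_append, valH, valTr, valT, ih1]
  | rdivR P A B _ ih => simp [valT, ← ih, valH_append, valH, valTr]
  | mulL D A B C _ ih =>
    rw [← ih]
    apply valH_plug
    simp [valH, valTr, valT]
  | mulR G D A B _ _ ih1 ih2 => simp [valH_append, valT, ih1, ih2]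
  | diaL D l A C _ ih =>
    rw [← ih]
    apply valH_plug
    simp [valH, valTr, valT]
  | diaR G l A _ ih => simp [valH, valTr, valT, ih]
  | boxL D l A C _ ih =>
    rw [← ih]
    apply valH_plug
    simp [valH, valTr, valT]
  | boxR G l A _ ih => simp [valT, ← ih, valH, valTr]
  | empL D l C _ ih =>
    rw [← ih]
    apply valH_plug
    simp [valH, valTr, valT]
  | empR l => simp [valH, valTr, valT]

theorem key_pow {a : K} {p : LKey} (hp : v p = a) (k : LKey) (n : ℕ)
    (h : ∀ k', k' ≠ p → v k' = 1 ∨ (if k' = k then 1 else 0) + n = 0) :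
    v k = a ^ (if p = k then 1 else 0) := by
  by_cases hk : p = k
  · subst hk; simp [hp]
  · rcases h k (Ne.symm hk) with h1 | h1
    · simp [hk, h1]
    · simp at h1

theorem valT_pow {a : K} (ha : a⁻¹ = a) {p : LKey} (hp : v p = a) (A : LTy)
    (h : ∀ k, k ≠ p → v k = 1 ∨ occ k A = 0) : valT v A = a ^ occ p A := by
  induction A with
  | prim n l => exact key_pow v hp _ 0 (by simpa [occ] using h)
  | ldiv A B ih1 ih2 =>
    have h1 := ih1 (fun k hk => (h k hk).imp_right (fun h => by simp only [occ] at h; omega))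
    have h2 := ih2 (fun k hk => (h k hk).imp_right (fun h => by simp only [occ] at h; omega))
    simp [valT, occ, h1, h2, pow_add, ← inv_pow, ha]
  | rdiv A B ih1 ih2 =>
    have h1 := ih1 (fun k hk => (h k hk).imp_right (fun h => by simp only [occ] at h; omega))
    have h2 := ih2 (fun k hk => (h k hk).imp_right (fun h => by simp only [occ] at h; omega))
    simp [valT, occ, h1, h2, pow_add, ← inv_pow, ha]
  | mul A B ih1 ih2 =>
    have h1 := ih1 (fun k hk => (h k hk).imp_right (fun h => by simp only [occ] at h; omega))
    have h2 := ih2 (fun k hk => (h k hk).imp_right (fun h => by simp only [occ] at h; omega))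
    simp [valT, occ, h1, h2, pow_add]
  | dia l A ih =>
    have h1 := ih (fun k hk => (h k hk).imp_right (fun h => by simp only [occ] at h; omega))
    have h2 := key_pow v hp (.inr l) 0 (fun k hk =>
      (h k hk).imp_right (fun h => by simp only [occ] at h; omega))
    simp only [valT, occ, h1, h2, pow_add]
  | box l A ih =>
    have h1 := ih (fun k hk => (h k hk).imp_right (fun h => by simp only [occ] at h; omega))
    have h2 := key_pow v hp (.inr l) 0 (fun k hk =>
      (h k hk).imp_right (fun h => by simp only [occ] at h; omega))
    simp only [valT, occ, h1, h2, pow_add, ← inv_pow, ha]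
  | emp l =>
    exact key_pow v hp _ 0 (by simpa [occ] using h)

/-- Hedge of leaves. -/
def lv (L : List LTy) : LHedge := L.map .leaf

theorem lv_append (X Y : List LTy) : lv (X ++ Y) = lv X ++ lv Y := by simp [lv]

theorem valL_pow {a : K} (ha : a⁻¹ = a) {p : LKey} (hp : v p = a) (L : List LTy)
    (h : ∀ k, k ≠ p → v k = 1 ∨ occH k (lv L) = 0) : valH v (lv L) = a ^ occH p (lv L) := by
  induction L with
  | nil => simp [lv, valH, occH]
  | cons A L ih =>
    have h1 := ih (fun k hk => (h k hk).imp_right (fun h => by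
      simp only [lv, List.map_cons, occH] at h ⊢; omega))
    have h2 := valT_pow v ha hp A (fun k hk => (h k hk).imp_right (fun h => by
      simp only [lv, List.map_cons, occH, occTr] at h ⊢; omega))
    simp only [lv] at h1
    simp only [lv, List.map_cons, valH, occH, valTr, occTr, h1, h2, pow_add]

end Val

theorem noncross {X1 X2 X3 X4 : List LTy} {C : LTy}
    (h : LP (lv (X1 ++ X2 ++ X3 ++ X4)) C) (p q : LKey)
    (p1 : occH p (lv X1) = 1) (p2 : occH p (lv X2) = 0) (p3 : occH p (lv X3) = 1)
    (p4 : occH p (lv X4) = 0) (p5 : occ p C = 0)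
    (q1 : occH q (lv X1) = 0) (q2 : occH q (lv X2) = 1) (q3 : occH q (lv X3) = 0)
    (q4 : occH q (lv X4) + occ q C = 1) : False := by
  have hpq : p ≠ q := by rintro rfl; omega
  let a : Equiv.Perm (Fin 3) := Equiv.swap 0 1
  let b : Equiv.Perm (Fin 3) := Equiv.swap 1 2
  let v : LKey → Equiv.Perm (Fin 3) := fun k => if k = p then a else if k = q then b else 1
  have ha : a⁻¹ = a := by decide
  have hb : b⁻¹ = b := by decide
  have vp : v p = a := by simp [v]
  have vq : v q = b := by simp [v, hpq.symm]
  have hv : ∀ k, k ≠ p → k ≠ q → v k = 1 := by intro k h1 h2; simp [v, h1, h2]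
  have cp : ∀ k n, n = 0 → (k = q → v k = 1 ∨ n = 0) := by intro k n h _; exact .inr h
  have e1 := valL_pow v ha vp X1 (fun k hk => by
    by_cases h : k = q
    · subst h; exact .inr q1
    · exact .inl (hv k hk h))
  have e3 := valL_pow v ha vp X3 (fun k hk => by
    by_cases h : k = q
    · subst h; exact .inr q3
    · exact .inl (hv k hk h))
  have e2 := valL_pow v hb vq X2 (fun k hk => by
    by_cases h : k = p
    · subst h; exact .inr p2
    · exact .inl (hv k h hk))
  have e4 := valL_pow v hb vq X4 (fun k hk => by
    by_cases h : k = p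
    · subst h; exact .inr p4
    · exact .inl (hv k h hk))
  have e5 := valT_pow v hb vq C (fun k hk => by
    by_cases h : k = p
    · subst h; exact .inr p5
    · exact .inl (hv k h hk))
  have e := h.val v
  rw [lv_append, lv_append, lv_append, valH_append, valH_append, valH_append,
    e1, e2, e3, e4, e5, p1, p3, q2] at e
  rcases Nat.eq_zero_or_pos (occH q (lv X4)) with h4 | h4
  · have h5 : occ q C = 1 := by omega
    rw [h4, h5] at e
    revert e; decide
  · have h5 : occ q C = 0 := by omega
    have h4' : occH q (lv X4) = 1 := by omega
    rw [h4', h5] at e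
    revert e; decide

/-- Weight of a key. -/
def wt : LKey → ℕ
  | .inl _ => 1
  | .inr _ => 2

def covers (S : Finset LKey) (A : LTy) : Prop := ∀ k, occ k A ≠ 0 → k ∈ S

theorem exists_covers (A : LTy) : ∃ S, covers S A := by
  have two : ∀ {A B : LTy}, (∃ S, covers S A) → (∃ S, covers S B) →
      ∃ S : Finset LKey, ∀ k, occ k A + occ k B ≠ 0 → k ∈ S := by
    rintro A B ⟨S, hS⟩ ⟨T, hT⟩
    refine ⟨S ∪ T, fun k hk => ?_⟩
    rw [Finset.mem_union]
    by_cases h : occ k A = 0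
    · exact .inr (hT k (by omega))
    · exact .inl (hS k h)
  have one : ∀ {A : LTy} (l : ℕ), (∃ S, covers S A) →
      ∃ S : Finset LKey, ∀ k, (if k = .inr l then 1 else 0) + occ k A ≠ 0 → k ∈ S := by
    rintro A l ⟨S, hS⟩
    refine ⟨insert (.inr l) S, fun k hk => ?_⟩
    rw [Finset.mem_insert]
    by_cases h : k = .inr l
    · exact .inl h
    · simp only [h, if_false] at hk
      exact .inr (hS k (by omega))
  induction A with
  | prim n l => exact ⟨{.inl (n, l)}, fun k hk => by simpa [occ] using hk⟩
  | emp l => exact ⟨{.inr l}, fun k hk => by simpa [occ] using hk⟩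
  | ldiv A B ih1 ih2 => exact two ih1 ih2
  | rdiv A B ih1 ih2 => exact two ih1 ih2
  | mul A B ih1 ih2 => exact two ih1 ih2
  | dia l A ih => exact one l ih
  | box l A ih => exact one l ih

theorem len_sum {S : Finset LKey} {A : LTy} (h : covers S A) :
    lenP (fgT A) = ∑ k ∈ S, wt k * occ k A := by
  have single : ∀ k0 : LKey, k0 ∈ S → ∑ k ∈ S, wt k * (if k = k0 then 1 else 0) = wt k0 := by
    intro k0 h0
    simp [h0]
  induction A with
  | prim n l =>
    simp only [fgT, lenP, occ]
    rw [single _ (h _ (by simp [occ]))]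
    rfl
  | emp l =>
    simp only [fgT, lenP, occ]
    rw [single _ (h _ (by simp [occ]))]
    rfl
  | ldiv A B ih1 ih2 =>
    simp only [fgT, lenP, occ, mul_add, Finset.sum_add_distrib]
    rw [ih1 (fun k hk => h k (by simp only [occ]; omega)),
      ih2 (fun k hk => h k (by simp only [occ]; omega))]
  | rdiv A B ih1 ih2 =>
    simp only [fgT, lenP, occ, mul_add, Finset.sum_add_distrib]
    rw [ih1 (fun k hk => h k (by simp only [occ]; omega)),
      ih2 (fun k hk => h k (by simp only [occ]; omega))]
  | mul A B ih1 ih2 =>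
    simp only [fgT, lenP, occ, mul_add, Finset.sum_add_distrib]
    rw [ih1 (fun k hk => h k (by simp only [occ]; omega)),
      ih2 (fun k hk => h k (by simp only [occ]; omega))]
  | dia l A ih =>
    simp only [fgT, lenP, occ, mul_add, Finset.sum_add_distrib]
    rw [ih (fun k hk => h k (by simp only [occ]; omega)), single _ (h _ (by simp [occ]))]
    simp only [wt]; omega
  | box l A ih =>
    simp only [fgT, lenP, occ, mul_add, Finset.sum_add_distrib]
    rw [ih (fun k hk => h k (by simp only [occ]; omega)), single _ (h _ (by simp [occ]))]
    simp only [wt]; omega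

theorem fgT_ne_one (A : LTy) : fgT A ≠ .one := by cases A <;> simp [fgT]

theorem fgT_guarded (A : LTy) : (fgT A).guarded := by
  induction A with
  | prim n l => simp [fgT, PTy.guarded]
  | emp l => simp [fgT, PTy.guarded]
  | ldiv A B ih1 ih2 => exact ⟨ih1, ih2⟩
  | rdiv A B ih1 ih2 => exact ⟨ih1, ih2⟩
  | mul A B ih1 ih2 => exact ⟨ih1, ih2⟩
  | dia l A ih =>
    have := fgT_ne_one A
    simp only [fgT]
    revert ih this
    generalize fgT A = T
    intro h1 h2
    cases T <;> simp_all [PTy.guarded]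
  | box l A ih => exact ih

theorem fgT_over (B : Finset ℕ) (A : LTy) :
    (fgT A).over B ↔ ∀ n l, occ (.inl (n, l)) A ≠ 0 → n ∈ B := by
  have two : ∀ A C : LTy, ((∀ n l, occ (.inl (n, l)) A ≠ 0 → n ∈ B) ∧
      (∀ n l, occ (.inl (n, l)) C ≠ 0 → n ∈ B)) ↔
      ∀ n l, occ (.inl (n, l)) A + occ (.inl (n, l)) C ≠ 0 → n ∈ B := by
    intro A C
    constructor
    · rintro ⟨h1, h2⟩ n l h
      by_cases h3 : occ (.inl (n, l)) A = 0
      · exact h2 n l (by omega)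
      · exact h1 n l h3
    · intro h
      exact ⟨fun n l h1 => h n l (by omega), fun n l h1 => h n l (by omega)⟩
  induction A with
  | prim n l =>
    simp only [fgT, PTy.over, occ]
    constructor
    · intro h n' l' h1
      simp at h1
      exact h1.1 ▸ h
    · intro h
      exact h n l (by simp)
  | emp l => simp [fgT, PTy.over, occ]
  | ldiv A C ih1 ih2 => simp only [fgT, PTy.over, occ, ih1, ih2, two]
  | rdiv A C ih1 ih2 => simp only [fgT, PTy.over, occ, ih1, ih2, two]
  | mul A C ih1 ih2 => simp only [fgT, PTy.over, occ, ih1, ih2, two]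
  | dia l A ih => simp [fgT, PTy.over, occ, ih]
  | box l A ih => simp [fgT, PTy.over, occ, ih]

/-- Weighted number of keys with an odd number of occurrences. -/
def dd (S : Finset LKey) (L : List LTy) : ℕ := ∑ k ∈ S, wt k * (occH k (lv L) % 2)

theorem four_point (S : Finset LKey) {X1 X2 X3 X4 : List LTy} {C : LTy}
    (h : LP (lv (X1 ++ X2 ++ X3 ++ X4)) C)
    (ht : ∀ k, occH k (lv (X1 ++ X2 ++ X3 ++ X4)) + occ k C ≤ 2) :
    dd S (X1 ++ X2) + dd S (X2 ++ X3) ≤ dd S X1 + dd S X3 ∨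
    dd S (X1 ++ X2) + dd S (X2 ++ X3) ≤ dd S (X1 ++ X2 ++ X3) + dd S X2 := by
  have hpar := h.parity
  simp only [lv_append, occH_append] at ht hpar
  by_cases hp : ∃ p, occH p (lv X1) = 1 ∧ occH p (lv X3) = 1
  · left
    obtain ⟨p, hp1, hp3⟩ := hp
    have := ht p
    unfold dd
    rw [← Finset.sum_add_distrib, ← Finset.sum_add_distrib]
    apply Finset.sum_le_sum
    intro k _
    rw [← mul_add, ← mul_add]
    apply Nat.mul_le_mul_left
    have a1 := ht k
    have a2 := hpar k
    have a3 : ¬ (occH k (lv X2) = 1 ∧ occH k (lv X4) + occ k C = 1) := by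
      rintro ⟨b1, b2⟩
      exact noncross h p k hp1 (by omega) hp3 (by omega) (by omega) (by omega) b1 (by omega) b2
    simp only [lv_append, occH_append]
    omega
  · right
    unfold dd
    rw [← Finset.sum_add_distrib, ← Finset.sum_add_distrib]
    apply Finset.sum_le_sum
    intro k _
    rw [← mul_add, ← mul_add]
    apply Nat.mul_le_mul_left
    have a1 := ht k
    have a2 := hpar k
    have a3 : ¬ (occH k (lv X1) = 1 ∧ occH k (lv X3) = 1) := fun h => hp ⟨k, h⟩
    simp only [lv_append, occH_append]
    omega

theorem dd_single {S : Finset LKey} {A : LTy} (h : covers S A) : dd S [A] ≤ lenP (fgT A) := by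
  rw [len_sum h]
  apply Finset.sum_le_sum
  intro k _
  apply Nat.mul_le_mul_left
  simp only [lv, List.map_cons, List.map_nil, occH, occTr]
  exact Nat.mod_le _ _

theorem dd_eq {S : Finset LKey} {L : List LTy} {C : LTy} (h : LP (lv L) C) :
    dd S L = dd S [C] := by
  unfold dd
  apply Finset.sum_congr rfl
  intro k _
  have := h.parity k
  congr 1
  have e : occH k (lv [C]) = occ k C := by
    simp [lv, occH, occTr]
  rw [e]
  omega

theorem find_pair (S : Finset LKey) (m : ℕ) {L : List LTy} {C : LTy} (h : LP (lv L) C)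
    (ht : ∀ k, occH k (lv L) + occ k C ≤ 2) (hL : 2 ≤ L.length)
    (hm : ∀ A ∈ L, dd S [A] ≤ m) (hC : dd S [C] ≤ m) :
    ∃ X a b Y, L = X ++ [a, b] ++ Y ∧ dd S [a, b] ≤ m := by
  by_contra hcon
  push Not at hcon
  have key : ∀ (P : List LTy) a b Y, L = P ++ [a, b] ++ Y →
      dd S (P ++ [a]) < dd S (P ++ [a, b]) ∧ m < dd S (P ++ [a, b]) := by
    intro P
    induction P using List.reverseRecOn with
    | nil =>
      intro a b Y e
      have h1 := hcon [] a b Y e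
      have h2 := hm a (by simp [e])
      simp only [List.nil_append]
      omega
    | append_singleton P c ih =>
      intro a b Y e
      have h0 := ih c a (b :: Y) (by simp [e])
      have h1 := hcon (P ++ [c]) a b Y e
      have h2 := hm a (by simp [e])
      have h3 := hm b (by simp [e])
      have e' : L = (P ++ [c]) ++ [a] ++ [b] ++ Y := by simp [e]
      have h4 := four_point S (X1 := P ++ [c]) (X2 := [a]) (X3 := [b]) (X4 := Y) (C := C)
        (e' ▸ h) (fun k => e' ▸ ht k)
      simp only [List.append_assoc, List.cons_append, List.nil_append] at h0 h1 h4 ⊢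
      omega
  obtain ⟨P, b, rfl⟩ : ∃ P b, L = P ++ [b] := by
    rcases List.eq_nil_or_concat L with rfl | ⟨P, b, rfl⟩
    · simp at hL
    · exact ⟨P, b, by simp⟩
  obtain ⟨P, a, rfl⟩ : ∃ P' a, P = P' ++ [a] := by
    rcases List.eq_nil_or_concat P with rfl | ⟨P, b, rfl⟩
    · simp at hL
    · exact ⟨P, b, by simp⟩
  have h1 := key P a b [] (by simp)
  have h2 := dd_eq (S := S) h
  simp only [List.append_assoc, List.cons_append, List.nil_append] at h1 h2
  omega

theorem fgH_lv (L : List LTy) : fgH (lv L) = (L.map fgT).map .leaf := by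
  induction L with
  | nil => simp [lv, fgH]
  | cons A L ih =>
    simp only [lv] at ih
    simp [lv, fgH, fgTr, ih]

theorem binary_aux (B : Finset ℕ) (m : ℕ) (S : Finset LKey) (n : ℕ) :
    ∀ (L : List LTy) (C : LTy), L.length ≤ n → LP (lv L) C →
    (∀ k, occH k (lv L) + occ k C ≤ 2) → (∀ A ∈ C :: L, okTy B m (fgT A) ∧ covers S A) →
    CutDeriv (TBm' B m) ((L.map fgT).map .leaf) (fgT C) := by
  induction n with
  | zero =>
    intro L C hn h ht hok
    have : L = [] := List.length_eq_zero_iff.mp (by omega)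
    subst this
    apply CutDeriv.base
    refine .inl (.inl (.inl ⟨[], fgT C, by simp, by simp, ?_, ?_⟩))
    · intro T hT
      simp only [List.mem_singleton] at hT
      subst hT
      exact (hok C (by simp)).1
    · simpa [lv, fgH] using h.sound
  | succ n ih =>
    intro L C hn h ht hok
    by_cases h2 : L.length ≤ 2
    · apply CutDeriv.base
      refine .inl (.inl (.inl ⟨L.map fgT, fgT C, rfl, by simpa using h2, ?_, ?_⟩))
      · intro T hT
        rw [← List.map_cons, List.mem_map] at hT
        obtain ⟨A, hA, rfl⟩ := hT
        exact (hok A hA).1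
      · rw [← fgH_lv]
        exact h.sound
    · have hd : ∀ A ∈ C :: L, dd S [A] ≤ m := fun A hA =>
        (dd_single (hok A hA).2).trans (hok A hA).1.2.2
      obtain ⟨X, a, b, Y, rfl, hab⟩ := find_pair S m h ht (by omega)
        (fun A hA => hd A (by simp [hA])) (hd C (by simp))
      obtain ⟨E, p1, p2, hk⟩ := interp h (.hole (lv X) (lv Y)) (lv [a, b])
        (by rw [lv_append, lv_append]; rfl) (by simp [lv])
      have hocc : ∀ k, occ k E ≤ occH k (lv [a, b]) % 2 := by
        intro k
        have a1 := hk k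
        have a2 := ht k
        simp only [lv_append, occH_append, occC] at a1 a2
        omega
      have hocc' : ∀ k, occ k E ≠ 0 → occ k a ≠ 0 ∨ occ k b ≠ 0 := by
        intro k h0
        have a1 := (hk k).1
        simp only [lv, List.map_cons, List.map_nil, occH, occTr] at a1
        omega
      have ha := hok a (by simp)
      have hb := hok b (by simp)
      have hcov : covers S E := by
        intro k h0
        rcases hocc' k h0 with h1 | h1
        · exact ha.2 k h1
        · exact hb.2 k h1
      have hE : okTy B m (fgT E) := by
        refine ⟨fgT_guarded E, (fgT_over B E).mpr ?_, ?_⟩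
        · intro n l h0
          rcases hocc' _ h0 with h1 | h1
          · exact (fgT_over B a).mp ha.1.2.1 n l h1
          · exact (fgT_over B b).mp hb.1.2.1 n l h1
        · rw [len_sum hcov]
          refine le_trans ?_ hab
          apply Finset.sum_le_sum
          intro k _
          exact Nat.mul_le_mul_left _ (hocc k)
      have d1 : CutDeriv (TBm' B m) (([a, b].map fgT).map .leaf) (fgT E) := by
        apply CutDeriv.base
        refine .inl (.inl (.inl ⟨[a, b].map fgT, fgT E, rfl, by simp, ?_, ?_⟩))
        · intro T hT
          simp only [List.map_cons, List.map_nil, List.mem_cons, List.not_mem_nil, or_false] at hT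
          rcases hT with rfl | rfl | rfl
          · exact hE
          · exact ha.1
          · exact hb.1
        · rw [← fgH_lv]
          exact p1.sound
      have d2 := ih (X ++ [E] ++ Y) C (by simp at hn ⊢; omega)
        (by simpa [LCtx.plug, lv] using p2)
        (fun k => by
          have a1 := hk k
          have a2 := ht k
          simp only [lv_append, occH_append] at a1 a2 ⊢
          simp only [lv, List.map_cons, List.map_nil, occH, occTr] at a1 a2 ⊢
          omega)
        (by
          intro A hA
          simp only [List.mem_cons, List.mem_append, List.not_mem_nil, or_false] at hA
          rcases hA with rfl | (h1 | rfl) | h1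
          · exact hok A (by simp)
          · exact hok A (by simp [h1])
          · exact ⟨hE, hcov⟩
          · exact hok A (by simp [h1]))
      have d3 := CutDeriv.cut _ (.hole ((X.map fgT).map .leaf) ((Y.map fgT).map .leaf))
        (fgT E) (fgT C) d1 (by simpa [PCtx.plug] using d2)
      simpa [PCtx.plug] using d3

theorem covers_list (L : List LTy) : ∃ S, ∀ A ∈ L, covers S A := by
  induction L with
  | nil => exact ⟨∅, by simp⟩
  | cons A L ih =>
    obtain ⟨S, hS⟩ := ih
    obtain ⟨T, hT⟩ := exists_covers A
    refine ⟨S ∪ T, fun X hX k hk => ?_⟩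
    rw [Finset.mem_union]
    rcases List.mem_cons.mp hX with rfl | h
    · exact .inr (hT k hk)
    · exact .inl (hS X h k hk)

theorem fgH_leaves {H : LHedge} {L : List PTy} (h : fgH H = L.map .leaf) :
    ∃ L', H = lv L' ∧ L'.map fgT = L := by
  induction L generalizing H with
  | nil => exact ⟨[], by simpa [lv] using fgH_nil h, rfl⟩
  | cons A L ih =>
    obtain ⟨t, X, rfl, h1, h2⟩ := fgH_cons h
    obtain ⟨A', rfl, h3⟩ := fgTr_leaf h1
    obtain ⟨L', rfl, h4⟩ := ih h2
    exact ⟨A' :: L', by simp [lv], by simp [h3, h4]⟩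

theorem yield_leaves (L : List PTy) : yieldHedge (L.map .leaf) = L := by
  induction L with
  | nil => simp [yieldHedge]
  | cons A L ih => simp [yieldHedge, yieldTree, ih]

/-- Bracket-free provable sequents are derivable by Cut. -/
theorem binary_reduction (B : Finset ℕ) (m : ℕ) {L : List PTy} {C : PTy}
    (hL : ∀ A ∈ L, okTy B m A) (hC : okTy B m C) (h : PProvS1 (L.map .leaf) C) :
    CutDeriv (TBm' B m) (L.map .leaf) C := by
  obtain ⟨H', C', M, -, hp, hH, hC', hk⟩ :=
    cut_elim (lift_rules (okTy B m)) (by rwa [yield_leaves]) hC h 0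
  obtain ⟨L', rfl, rfl⟩ := fgH_leaves hH
  subst hC'
  obtain ⟨S, hS⟩ := covers_list (C' :: L')
  refine binary_aux B m S _ L' C' le_rfl hp (fun k => (hk k).1) (fun A hA => ⟨?_, hS A hA⟩)
  rcases List.mem_cons.mp hA with rfl | h1
  · exact hC
  · exact hL _ (List.mem_map_of_mem h1)

/-! ### Part 5 : elimination of brackets -/

/-- One bracket around the types `L` is replaced by the single type `X`. -/
def BStep (B : Finset ℕ) (m : ℕ) (L : List PTy) (X : PTy) : Prop :=
  (∃ A, A ≠ .one ∧ PProvS1 (L.map .leaf) A ∧ X = .dia A ∧ okTy B m (.dia A)) ∨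
  (∃ A, PProvS1 (L.map .leaf) (.box A) ∧ X = A ∧ okTy B m (.box A)) ∨
  (L = [] ∧ X = .dia .one ∧ okTy B m (.dia .one))

inductive Red (B : Finset ℕ) (m : ℕ) : PHedge → List PTy → Prop where
  | nil : Red B m [] []
  | leaf (A H L) : okTy B m A → Red B m H L → Red B m (.leaf A :: H) (A :: L)
  | node (K L' X H L) : Red B m K L' → BStep B m L' X → Red B m H L →
      Red B m (.node K :: H) (X :: L)

theorem BStep.sound {B m L X} (h : BStep B m L X) : PProvS1 [.node (L.map .leaf)] X := by
  rcases h with ⟨A, -, h, rfl, -⟩ | ⟨A, h, rfl, -⟩ | ⟨rfl, rfl, -⟩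
  · exact .diaR _ _ h
  · have h2 := PProvS1.boxL .nil X X (by simpa [PCtx.plug] using prov_id X)
    have h3 := PProvS1.cut _ (.brk .nil [] []) _ _ h (by simpa [PCtx.plug] using h2)
    simpa [PCtx.plug] using h3
  · exact .diaR _ _ .oneR

theorem BStep.ok {B m L X} (h : BStep B m L X) : okTy B m X := by
  rcases h with ⟨A, -, -, rfl, h⟩ | ⟨A, -, rfl, h⟩ | ⟨-, rfl, h⟩
  · exact h
  · exact ok_box h
  · exact h

section
variable {B : Finset ℕ} {m : ℕ}

theorem Red.ok {H L} (h : Red B m H L) : ∀ A ∈ L, okTy B m A := by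
  induction h with
  | nil => simp
  | leaf A H L hA _ ih =>
    intro T hT
    rcases List.mem_cons.mp hT with rfl | h
    · exact hA
    · exact ih T h
  | node K L' X H L _ hs _ _ ih =>
    intro T hT
    rcases List.mem_cons.mp hT with rfl | h
    · exact hs.ok
    · exact ih T h

theorem Red.append {X Y L1 L2} (h1 : Red B m X L1) (h2 : Red B m Y L2) :
    Red B m (X ++ Y) (L1 ++ L2) := by
  induction h1 with
  | nil => exact h2
  | leaf A H L hA _ ih => exact .leaf _ _ _ hA ih
  | node K L' X H L hK hs _ _ ih => exact .node _ _ _ _ _ hK hs ih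

theorem red_nil {L} (h : Red B m [] L) : L = [] := by cases h; rfl

theorem red_leaf {A H L} (h : Red B m (.leaf A :: H) L) :
    ∃ L', L = A :: L' ∧ okTy B m A ∧ Red B m H L' := by
  cases h with
  | leaf _ _ L' hA h => exact ⟨L', rfl, hA, h⟩

theorem red_node {K H L} (h : Red B m (.node K :: H) L) :
    ∃ X L1 L2, L = X :: L2 ∧ Red B m K L1 ∧ BStep B m L1 X ∧ Red B m H L2 := by
  cases h with
  | node _ L1 X _ L2 hK hs h => exact ⟨X, L1, L2, rfl, hK, hs, h⟩

theorem red_leaf1 {A L} (h : Red B m [.leaf A] L) : L = [A] ∧ okTy B m A := by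
  obtain ⟨L', rfl, hA, h1⟩ := red_leaf h
  rw [red_nil h1]
  exact ⟨rfl, hA⟩

theorem red_node1 {K L} (h : Red B m [.node K] L) :
    ∃ X L1, L = [X] ∧ Red B m K L1 ∧ BStep B m L1 X := by
  obtain ⟨X, L1, L2, rfl, h1, h2, h3⟩ := red_node h
  rw [red_nil h3]
  exact ⟨X, L1, rfl, h1, h2⟩

theorem red_append_inv {X Y : PHedge} {L} (h : Red B m (X ++ Y) L) :
    ∃ L1 L2, L = L1 ++ L2 ∧ Red B m X L1 ∧ Red B m Y L2 := by
  induction X generalizing L with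
  | nil => exact ⟨[], L, rfl, .nil, h⟩
  | cons t X ih =>
    cases t with
    | leaf A =>
      obtain ⟨L', rfl, hA, h1⟩ := red_leaf h
      obtain ⟨L1, L2, rfl, h2, h3⟩ := ih h1
      exact ⟨A :: L1, L2, rfl, .leaf _ _ _ hA h2, h3⟩
    | node K =>
      obtain ⟨T, L', L0, rfl, hK, hs, h1⟩ := red_node h
      obtain ⟨L1, L2, rfl, h2, h3⟩ := ih h1
      exact ⟨T :: L1, L2, rfl, .node _ _ _ _ _ hK hs h2, h3⟩

/-- `X` may be replaced by `X'` in provable reduced sequents. -/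
def Repl (B : Finset ℕ) (m : ℕ) (X X' : PHedge) : Prop :=
  ∀ L, Red B m X L → ∃ L', Red B m X' L' ∧ (L = [] → L' = []) ∧
    ∀ (L1 L2 : List PTy) C, PProvS1 ((L1 ++ L ++ L2).map .leaf) C →
      PProvS1 ((L1 ++ L' ++ L2).map .leaf) C

theorem Repl.plug {X X' : PHedge} (h : Repl B m X X') (D : PCtx) :
    Repl B m (D.plug X) (D.plug X') := by
  induction D with
  | hole a b =>
    intro L hL
    obtain ⟨L0, L3, rfl, h0, h3⟩ := red_append_inv hL
    obtain ⟨L1, L2, rfl, h1, h2⟩ := red_append_inv h0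
    obtain ⟨L', g1, g2, g3⟩ := h L2 h2
    refine ⟨L1 ++ L' ++ L3, (h1.append g1).append h3, ?_, ?_⟩
    · intro he
      simp only [List.append_eq_nil_iff] at he ⊢
      exact ⟨⟨he.1.1, g2 he.1.2⟩, he.2⟩
    · intro M1 M2 C hp
      have := g3 (M1 ++ L1) (L3 ++ M2) C (by simpa only [List.append_assoc] using hp)
      simpa only [List.append_assoc] using this
  | brk c a b ih =>
    intro L hL
    obtain ⟨L1, L0, rfl, h1, h0⟩ := red_append_inv hL
    obtain ⟨T, L2, L3, rfl, hK, hs, h3⟩ := red_node h0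
    obtain ⟨L', g1, g2, g3⟩ := ih L2 hK
    refine ⟨L1 ++ T :: L3, h1.append (.node _ L' _ _ _ g1 ?_ h3), id, fun _ _ _ h => h⟩
    rcases hs with ⟨A, hA, h, e, o⟩ | ⟨A, h, e, o⟩ | ⟨e1, e, o⟩
    · exact .inl ⟨A, hA, by simpa using g3 [] [] A (by simpa using h), e, o⟩
    · exact .inr (.inl ⟨A, by simpa using g3 [] [] (.box A) (by simpa using h), e, o⟩)
    · exact .inr (.inr ⟨g2 e1, e, o⟩)

def RedProv (B : Finset ℕ) (m : ℕ) (H : PHedge) (C : PTy) : Prop :=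
  ∃ L, Red B m H L ∧ PProvS1 (L.map .leaf) C

theorem Repl.use {X X' : PHedge} (h : Repl B m X X') (D : PCtx) {C}
    (hp : RedProv B m (D.plug X) C) : RedProv B m (D.plug X') C := by
  obtain ⟨L, h1, h2⟩ := hp
  obtain ⟨L', g1, -, g3⟩ := h.plug D L h1
  exact ⟨L', g1, by simpa using g3 [] [] C (by simpa using h2)⟩

theorem red_rules (B : Finset ℕ) (m : ℕ) : ClosedRules (okTy B m) (RedProv B m) where
  id p h := ⟨[.prim p], .leaf _ _ _ h .nil, .id p⟩
  ldivL G D A T C ho h1 h2 := by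
    refine Repl.use ?_ D h2
    obtain ⟨LG, hG, hp⟩ := h1
    intro L hL
    obtain ⟨rfl, -⟩ := red_leaf1 hL
    refine ⟨LG ++ [.ldiv A T], hG.append (.leaf _ _ _ ho .nil), by simp, ?_⟩
    intro L1 L2 C h
    have := PProvS1.ldivL _ (.hole (L1.map .leaf) (L2.map .leaf)) A T C hp
      (by simpa [PCtx.plug] using h)
    simpa [PCtx.plug] using this
  ldivR P A T ho h := by
    obtain ⟨L, hL, hp⟩ := h
    obtain ⟨L', rfl, -, h1⟩ := red_leaf hL
    exact ⟨L', h1, .ldivR _ _ _ hp⟩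
  rdivL G D A T C ho h1 h2 := by
    refine Repl.use ?_ D h2
    obtain ⟨LG, hG, hp⟩ := h1
    intro L hL
    obtain ⟨rfl, -⟩ := red_leaf1 hL
    refine ⟨.rdiv T A :: LG, .leaf _ _ _ ho hG, by simp, ?_⟩
    intro L1 L2 C h
    have := PProvS1.rdivL _ (.hole (L1.map .leaf) (L2.map .leaf)) A T C hp
      (by simpa [PCtx.plug] using h)
    simpa [PCtx.plug] using this
  rdivR P A T ho h := by
    obtain ⟨L, hL, hp⟩ := h
    obtain ⟨L1, L2, rfl, h1, h2⟩ := red_append_inv hL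
    obtain ⟨rfl, -⟩ := red_leaf1 h2
    exact ⟨L1, h1, .rdivR _ _ _ (by simpa using hp)⟩
  mulL D A T C ho h := by
    refine Repl.use ?_ D h
    intro L hL
    obtain ⟨L', rfl, -, h1⟩ := red_leaf hL
    obtain ⟨rfl, -⟩ := red_leaf1 h1
    refine ⟨[.mul A T], .leaf _ _ _ ho .nil, by simp, ?_⟩
    intro L1 L2 C h
    have := PProvS1.mulL (.hole (L1.map .leaf) (L2.map .leaf)) A T C
      (by simpa [PCtx.plug] using h)
    simpa [PCtx.plug] using this
  mulR G H A T ho h1 h2 := by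
    obtain ⟨L1, r1, p1⟩ := h1
    obtain ⟨L2, r2, p2⟩ := h2
    exact ⟨L1 ++ L2, r1.append r2, by simpa using PProvS1.mulR _ _ _ _ p1 p2⟩
  diaL D A C hA ho h := by
    refine Repl.use ?_ D h
    intro L hL
    obtain ⟨X, L1, rfl, h1, hs⟩ := red_node1 hL
    obtain ⟨rfl, -⟩ := red_leaf1 h1
    refine ⟨[.dia A], .leaf _ _ _ ho .nil, by simp, ?_⟩
    intro L1 L2 C h
    have h3 := PProvS1.diaL .nil A X (by simpa [PCtx.plug] using hs.sound)
    have := PProvS1.cut _ (.hole (L1.map .leaf) (L2.map .leaf)) X C h3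
      (by simpa [PCtx.plug] using h)
    simpa [PCtx.plug] using this
  diaR G A hA ho h := by
    obtain ⟨L, hL, hp⟩ := h
    exact ⟨[.dia A], .node _ L _ _ _ hL (.inl ⟨A, hA, hp, rfl, ho⟩) .nil, prov_id _⟩
  boxL D A C ho h := by
    refine Repl.use ?_ D h
    intro L hL
    obtain ⟨rfl, -⟩ := red_leaf1 hL
    exact ⟨[A], .node _ [.box A] _ _ _ (.leaf _ _ _ ho .nil)
      (.inr (.inl ⟨A, prov_id _, rfl, ho⟩)) .nil, by simp, fun _ _ _ h => h⟩
  boxR G A ho h := by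
    obtain ⟨L, hL, hp⟩ := h
    obtain ⟨X, L1, rfl, h1, hs⟩ := red_node1 hL
    refine ⟨L1, h1, .boxR _ _ ?_⟩
    have := PProvS1.cut _ .nil X A hs.sound (by simpa [PCtx.plug] using hp)
    simpa [PCtx.plug] using this
  empL D C ho h := by
    refine Repl.use ?_ D h
    intro L hL
    obtain ⟨X, L1, rfl, h1, hs⟩ := red_node1 hL
    have h2 := red_nil h1
    subst h2
    refine ⟨[.dia .one], .leaf _ _ _ ho .nil, by simp, ?_⟩
    intro L1 L2 C h
    have h2 := PProvS1.oneL (.brk .nil [] []) X (by simpa [PCtx.plug] using hs.sound)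
    have h3 := PProvS1.diaL .nil .one X (by simpa [PCtx.plug] using h2)
    have := PProvS1.cut _ (.hole (L1.map .leaf) (L2.map .leaf)) X C h3
      (by simpa [PCtx.plug] using h)
    simpa [PCtx.plug] using this
  empR ho := ⟨[.dia .one], .node _ [] _ _ _ .nil (.inr (.inr ⟨rfl, rfl, ho⟩)) .nil, prov_id _⟩

theorem BStep.cutDeriv {L X} (hL : ∀ A ∈ L, okTy B m A) (h : BStep B m L X) :
    CutDeriv (TBm' B m) [.node (L.map .leaf)] X := by
  rcases h with ⟨A, hA, h, rfl, ho⟩ | ⟨A, h, rfl, ho⟩ | ⟨rfl, rfl, ho⟩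
  · have h1 := binary_reduction B m hL (ok_dia hA ho) h
    have h2 : CutDeriv (TBm' B m) [.node [.leaf A]] (.dia A) := by
      refine .base _ _ (.inl (.inr ⟨A, (ok_dia hA ho).1, ho.2.1, ?_, rfl⟩))
      have := ho.2.2
      simp only [lenP] at this
      omega
    have h3 := CutDeriv.cut _ (.brk .nil [] []) _ _ h1 (by simpa [PCtx.plug] using h2)
    simpa [PCtx.plug] using h3
  · have h1 := binary_reduction B m hL ho h
    have h2 : CutDeriv (TBm' B m) [.node [.leaf (.box X)]] X := by
      refine .base _ _ (.inr ⟨X, ho.1, ho.2.1, ?_, rfl⟩)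
      have := ho.2.2
      simp only [lenP] at this
      omega
    have h3 := CutDeriv.cut _ (.brk .nil [] []) _ _ h1 (by simpa [PCtx.plug] using h2)
    simpa [PCtx.plug] using h3
  · exact .base _ _ (.inl (.inl (.inr rfl)))

theorem Red.cutDeriv {H L} (h : Red B m H L) : ∀ (D : PCtx) C,
    CutDeriv (TBm' B m) (D.plug (L.map .leaf)) C → CutDeriv (TBm' B m) (D.plug H) C := by
  induction h with
  | nil => exact fun _ _ h => h
  | leaf A H L hA _ ih =>
    intro D C h
    have := ih (D.comp (.hole [.leaf A] [])) C (by simpa [PCtx.plug_comp, PCtx.plug] using h)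
    simpa [PCtx.plug_comp, PCtx.plug] using this
  | node K L' X H L hK hs _ ih1 ih2 =>
    intro D C h
    have h1 := ih2 (D.comp (.hole [.leaf X] [])) C (by simpa [PCtx.plug_comp, PCtx.plug] using h)
    have h2 := CutDeriv.cut _ (D.comp (.hole [] H)) X C (hs.cutDeriv hK.ok)
      (by simpa [PCtx.plug_comp, PCtx.plug] using h1)
    have h3 := ih1 (D.comp (.brk .nil [] H)) C (by simpa [PCtx.plug_comp, PCtx.plug] using h2)
    simpa [PCtx.plug_comp, PCtx.plug] using h3

theorem cutDeriv_sound {H C} (h : CutDeriv (TBm' B m) H C) : PProvS1 H C := by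
  induction h with
  | base G A h =>
    rcases h with ((⟨L, T, e, -, -, hp⟩ | e) | ⟨T, -, -, -, e⟩) | ⟨T, -, -, -, e⟩
    · obtain ⟨rfl, rfl⟩ := Prod.mk.inj e
      exact hp
    · obtain ⟨rfl, rfl⟩ := Prod.mk.inj e
      exact .diaR _ _ .oneR
    · obtain ⟨rfl, rfl⟩ := Prod.mk.inj e
      exact .diaR _ _ (prov_id _)
    · obtain ⟨rfl, rfl⟩ := Prod.mk.inj e
      have := PProvS1.boxL .nil A A (by simpa [PCtx.plug] using prov_id A)
      simpa [PCtx.plug] using this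
  | cut G D A C _ _ ih1 ih2 => exact .cut _ _ _ _ ih1 ih2

end

/-- An L*₁◇ sequent whose yield consists of guarded types over `B` of length ≤ m is
provable in L*₁◇ iff it is derivable from `T'_{B,m}` using only Cut. -/
theorem provable_iff_cut_derivable_from_TBm' (B : Finset ℕ) (m : ℕ) (hm : 0 < m)
    (G : PHedge) (C : PTy)
    (hall : ∀ A ∈ yieldHedge G ++ [C], A.guarded ∧ A.over B ∧ lenP A ≤ m) :
    PProvS1 G C ↔ CutDeriv (TBm' B m) G C := by

  constructor
  · intro h
    have hC : okTy B m C := hall C (by simp)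
    have hG : ∀ A ∈ yieldHedge G, okTy B m A := fun A hA => hall A (by simp [hA])
    obtain ⟨L, hr, hp⟩ := cut_elim (red_rules B m) hG hC h
    have h1 := binary_reduction B m hr.ok hC hp
    have h2 := hr.cutDeriv .nil C (by simpa [PCtx.plug] using h1)
    simpa [PCtx.plug] using h2
  · exact cutDeriv_sound
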